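/- arXiv:2509.00241 — 2 statements merged into one kernel-verified Lean document; each statement's English description precedes it below -/
import Mathlib

section
/- For the map f, for every nonempty closed connected subset C ⊆ S, the set {x ∈ [0,1] : V(x) = πC} has Hausdorff dimension 1. -/
open MeasureTheory Filter Topology Set
open scoped ENNReal

noncomputable section

/-- The interval map `f` of Serre–Yang type: `f(x) = x + 18x³` on `[0,1/3]`,
`f(x) = x + 72(x − 1/2)³` on `(1/3,2/3)` and `f(x) = x + 18(x − 1)³` on `[2/3,1]`. -/
def theMap : ℝ → ℝ := fun x =>
  if x ≤ 1 / 3 then x + 18 * x ^ 3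
  else if x < 2 / 3 then x + 72 * (x - 1 / 2) ^ 3
  else x + 18 * (x - 1) ^ 3

/-- The three neutral fixed points `0`, `1/2`, `1`. -/
def theFixedPts : Fin 3 → ℝ := ![0, 1 / 2, 1]

/-- The `n`-th empirical measure `e_n(x) = (1/n) ∑_{k<n} δ_{f^k x}`. -/
def empMeasure (f : ℝ → ℝ) (n : ℕ) (x : ℝ) : Measure ℝ :=
  (n : ℝ≥0∞)⁻¹ • ∑ k ∈ Finset.range n, Measure.dirac (f^[k] x)

/-- Weak* convergence of a sequence of measures, tested against bounded continuous functions. -/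
def WeakTendsto (μ : ℕ → Measure ℝ) (ν : Measure ℝ) : Prop :=
  ∀ g : BoundedContinuousFunction ℝ ℝ,
    Tendsto (fun n => ∫ y, g y ∂(μ n)) atTop (𝓝 (∫ y, g y ∂ν))

/-- `V(x)`: the set of weak* limit points of `(e_n(x))_{n ≥ 1}`. -/
def Vset (f : ℝ → ℝ) (x : ℝ) : Set (Measure ℝ) :=
  {ν | ∃ φ : ℕ → ℕ, StrictMono φ ∧ WeakTendsto (fun k => empMeasure f (φ k + 1) x) ν}

/-- The simplex `S = {p̄ ∈ [0,1]³ : p₁ + p₂ + p₃ = 1}`. -/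
def simplexS : Set (Fin 3 → ℝ) :=
  {p | (∀ i, p i ∈ Set.Icc (0:ℝ) 1) ∧ ∑ i, p i = 1}

/-- The measure `ν_p̄ = p₁ δ_0 + p₂ δ_{1/2} + p₃ δ_1`. -/
def nuMeasure (p : Fin 3 → ℝ) : Measure ℝ :=
  ∑ j, ENNReal.ofReal (p j) • Measure.dirac (theFixedPts j)

/-!
A point of `[0, 1]` is described by the branches its orbit visits. Words ending in two different
letters have bounded distortion, and the lengths of their cylinders are small once the words are
long; hence for any `s < 1` there is a finite family of words with pairwise separated cylinders and
`∑ |cylinder| ^ s ≥ 1`, whose free concatenations code a set of dimension at least `s`. At the times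
`k` that are perfect squares, insert a run of `k` copies of a single letter `a k`. The total length
of the runs before time `k` is of order `k ^ (3 / 2)`, which dominates the freely chosen words, so
the empirical measures only see the fixed points near which the orbit lingers during the runs.
Because these fixed points are neutral, a run of length `k` shrinks cylinders only by a factor
polynomial in `k`; the runs together cost a subexponential factor, which does not lower the
dimension. It remains to choose the letters: as `C` is connected, a walk in `C` with steps tending
to `0` can accumulate at every point of `C`, and slowing it down and rounding it greedily to
vertices of the simplex gives letters `a k` whose running frequencies follow the walk.
-/

/-! ### Slow walks -/

section BlockIndex

/-- For a strictly increasing `τ : ℕ → ℕ` with `τ 0 = 0`, the index `k` of the block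
`[τ k, τ (k + 1))` that contains `n`. -/
def blockIndex (τ : ℕ → ℕ) (n : ℕ) : ℕ := Nat.findGreatest (fun k => τ k ≤ n) n

variable {τ : ℕ → ℕ}

theorem apply_blockIndex_le (h0 : τ 0 = 0) (n : ℕ) : τ (blockIndex τ n) ≤ n :=
  Nat.findGreatest_spec (P := fun k => τ k ≤ n) (Nat.zero_le n) (by simp [h0])

theorem lt_apply_blockIndex_add_one (hτ : StrictMono τ) (n : ℕ) : n < τ (blockIndex τ n + 1) := by
  by_contra! h
  exact Nat.findGreatest_is_greatest (Nat.lt_succ_self _) (hτ.le_apply.trans h) h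

theorem blockIndex_eq (hτ : StrictMono τ) (h0 : τ 0 = 0) {m n : ℕ} (hm : τ m ≤ n)
    (hn : n < τ (m + 1)) : blockIndex τ n = m := by
  apply le_antisymm
  · exact Nat.lt_succ_iff.1 (hτ.lt_iff_lt.1 ((apply_blockIndex_le h0 n).trans_lt hn))
  · exact Nat.lt_succ_iff.1 (hτ.lt_iff_lt.1 (hm.trans_lt (lt_apply_blockIndex_add_one hτ n)))

theorem blockIndex_apply (hτ : StrictMono τ) (h0 : τ 0 = 0) (m : ℕ) : blockIndex τ (τ m) = m :=
  blockIndex_eq hτ h0 le_rfl (hτ m.lt_succ_self)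

theorem blockIndex_add_one (hτ : StrictMono τ) (h0 : τ 0 = 0) (n : ℕ) :
    blockIndex τ (n + 1) = blockIndex τ n ∨
      blockIndex τ (n + 1) = blockIndex τ n + 1 ∧ τ (blockIndex τ n + 1) = n + 1 := by
  rcases (Nat.succ_le_of_lt (lt_apply_blockIndex_add_one hτ n)).lt_or_eq with h | h
  · exact .inl (blockIndex_eq hτ h0 ((apply_blockIndex_le h0 n).trans n.le_succ) h)
  · refine .inr ⟨?_, h.symm⟩
    rw [← Nat.succ_eq_add_one n, h, blockIndex_apply hτ h0]

theorem tendsto_blockIndex_atTop (hτ : StrictMono τ) :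
    Tendsto (blockIndex τ) atTop atTop := by
  refine tendsto_atTop.2 fun m => ?_
  filter_upwards [eventually_ge_atTop (τ m)] with n hn
  exact Nat.lt_succ_iff.1 (hτ.lt_iff_lt.1 (hn.trans_lt (lt_apply_blockIndex_add_one hτ n)))

end BlockIndex

section SlowWalk

theorem exists_chain_dist_lt {X : Type*} [PseudoMetricSpace X] [PreconnectedSpace X] {ε : ℝ}
    (hε : 0 < ε) (x y : X) :
    ∃ (N : ℕ) (c : ℕ → X), c 0 = x ∧ c (N + 1) = y ∧ ∀ i ≤ N, dist (c i) (c (i + 1)) < ε := by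
  have h : Relation.TransGen (fun u v : X => dist u v < ε) x y := by
    refine PreconnectedSpace.induction₂' (Relation.TransGen fun u v : X => dist u v < ε)
      (fun u => ?_) ⟨fun _ _ _ h₁ h₂ => h₁.trans h₂⟩ x y
    filter_upwards [Metric.ball_mem_nhds u hε] with v hv
    exact ⟨.single (Metric.mem_ball'.1 hv), .single hv⟩
  induction h using Relation.TransGen.head_induction_on with
  | @single u h => exact ⟨0, fun i => Nat.casesOn i u fun _ => y, rfl, rfl, by simpa⟩
  | @head u v huv _ ih =>
    obtain ⟨N, c, rfl, hN, hc⟩ := ih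
    refine ⟨N + 1, fun i => Nat.casesOn i u c, rfl, hN, fun i hi => ?_⟩
    cases i with
    | zero => exact huv
    | succ i => exact hc i (by lia)

theorem exists_seq_forall_mapClusterPt (X : Type*) [TopologicalSpace X]
    [TopologicalSpace.SeparableSpace X] [Nonempty X] :
    ∃ d : ℕ → X, ∀ x, MapClusterPt x atTop d := by
  refine ⟨fun m => TopologicalSpace.denseSeq X (Nat.unpair m).1, fun x => ?_⟩
  refine mapClusterPt_iff_frequently.2 fun s hs => frequently_atTop.2 fun T => ?_
  obtain ⟨j, hj⟩ := (TopologicalSpace.denseRange_denseSeq X).exists_mem_open isOpen_interior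
    ⟨x, mem_interior_iff_mem_nhds.2 hs⟩
  exact ⟨Nat.pair j T, Nat.right_le_pair _ _, by simpa using interior_subset hj⟩

theorem exists_seq_dist_succ_tendsto_zero_forall_mapClusterPt (X : Type*) [PseudoMetricSpace X]
    [PreconnectedSpace X] [TopologicalSpace.SeparableSpace X] [Nonempty X] :
    ∃ p : ℕ → X, Tendsto (fun t => dist (p t) (p (t + 1))) atTop (𝓝 0) ∧
      ∀ x, MapClusterPt x atTop p := by
  obtain ⟨d, hd⟩ := exists_seq_forall_mapClusterPt X
  choose N c hc0 hcN hc using fun m : ℕ =>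
    exists_chain_dist_lt (Nat.one_div_pos_of_nat (α := ℝ) (n := m)) (d m) (d (m + 1))
  set τ : ℕ → ℕ := fun m => ∑ i ∈ Finset.range m, (N i + 1)
  have hτ_succ (m) : τ (m + 1) = τ m + (N m + 1) := Finset.sum_range_succ _ _
  have hτ : StrictMono τ := strictMono_nat_of_lt_succ fun m => by rw [hτ_succ]; lia
  have h0 : τ 0 = 0 := rfl
  let K := blockIndex τ
  let p t := c (K t) (t - τ (K t))
  have hp_τ (m) : p (τ m) = d m := by simp only [p, K, blockIndex_apply hτ h0, Nat.sub_self, hc0]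
  have hp_succ (t) : p (t + 1) = c (K t) (t - τ (K t) + 1) := by
    have hle := apply_blockIndex_le h0 t
    rcases blockIndex_add_one hτ h0 t with h | ⟨-, h⟩
    · simp only [p, K, h, Nat.sub_add_comm hle]
    · have : t - τ (K t) = N (K t) := by simp only [hτ_succ] at h; lia
      rw [← h, hp_τ, this, hcN]
  refine ⟨p, ?_, fun x => ?_⟩
  · refine squeeze_zero (fun _ => dist_nonneg) (fun t => ?_)
      (tendsto_one_div_add_atTop_nhds_zero_nat.comp (tendsto_blockIndex_atTop hτ))
    have hlt := lt_apply_blockIndex_add_one hτ t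
    rw [hτ_succ] at hlt
    rw [hp_succ]
    exact (hc _ _ (by lia)).le
  · have hd_eq : d = p ∘ τ := funext fun m => (hp_τ m).symm
    exact (hd_eq ▸ hd x).of_comp hτ.tendsto_atTop

variable {E : Type*} [NormedAddCommGroup E] [NormedSpace ℝ E]

theorem exists_strictMono_two_mul_le {W : ℕ → ℝ} (hW : Tendsto W atTop atTop) :
    ∃ τ : ℕ → ℕ, StrictMono τ ∧ τ 0 = 0 ∧ ∀ m, 2 * W (τ m) ≤ W (τ (m + 1)) := by
  have h (n : ℕ) : ∃ n' > n, 2 * W n ≤ W n' :=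
    ((eventually_gt_atTop n).and (hW.eventually_ge_atTop _)).exists
  choose next hlt hle using h
  refine ⟨fun m => next^[m] 0, strictMono_nat_of_lt_succ fun m => ?_, rfl, fun m => ?_⟩
  · simpa only [Function.iterate_succ_apply'] using hlt _
  · simpa only [Function.iterate_succ_apply'] using hle _

theorem norm_sum_smul_sub_le {τ : ℕ → ℕ} (hτ : StrictMono τ) (h0 : τ 0 = 0) {w : ℕ → ℝ}
    (hw : ∀ i, 0 ≤ w i) (p : ℕ → E) (k : ℕ) :
    ‖∑ i ∈ Finset.range k, w i • p (blockIndex τ i) -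
        (∑ i ∈ Finset.range k, w i) • p (blockIndex τ k)‖ ≤
      ∑ m ∈ Finset.range (blockIndex τ k),
        (∑ i ∈ Finset.range (τ (m + 1)), w i) * dist (p m) (p (m + 1)) := by
  induction k with
  | zero => simpa using Finset.sum_nonneg fun m _ =>
      mul_nonneg (Finset.sum_nonneg fun i _ => hw i) dist_nonneg
  | succ k ih =>
    have hsplit : ∑ i ∈ Finset.range (k + 1), w i • p (blockIndex τ i) -
        (∑ i ∈ Finset.range (k + 1), w i) • p (blockIndex τ (k + 1)) =
      (∑ i ∈ Finset.range k, w i • p (blockIndex τ i) -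
        (∑ i ∈ Finset.range k, w i) • p (blockIndex τ k)) +
        (∑ i ∈ Finset.range (k + 1), w i) •
          (p (blockIndex τ k) - p (blockIndex τ (k + 1))) := by
      simp only [Finset.sum_range_succ, smul_sub, add_smul]
      abel
    rcases blockIndex_add_one hτ h0 k with h | ⟨h, hk⟩
    · rwa [hsplit, h, sub_self, smul_zero, add_zero]
    · rw [hsplit, h, Finset.sum_range_succ _ (blockIndex τ k), hk]
      refine (norm_add_le _ _).trans (add_le_add ih ?_)
      rw [norm_smul, ← dist_eq_norm, Real.norm_of_nonneg (Finset.sum_nonneg fun i _ => hw i)]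

/-- Holding a walk still for longer and longer stretches makes its weighted running average
follow its current position. -/
theorem exists_slowdown_sum_smul_isLittleO {p : ℕ → E}
    (hp : Tendsto (fun t => dist (p t) (p (t + 1))) atTop (𝓝 0)) {w : ℕ → ℝ}
    (hw : ∀ i, 0 ≤ w i) (hW : Tendsto (fun k => ∑ i ∈ Finset.range k, w i) atTop atTop) :
    ∃ κ τ : ℕ → ℕ, StrictMono τ ∧ (∀ m, κ (τ m) = m) ∧
      (fun k => ∑ i ∈ Finset.range k, w i • p (κ i) -
        (∑ i ∈ Finset.range k, w i) • p (κ k)) =o[atTop] fun k => ∑ i ∈ Finset.range k, w i := by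
  set W : ℕ → ℝ := fun k => ∑ i ∈ Finset.range k, w i
  have hW_mono : Monotone W := fun a b hab =>
    Finset.sum_le_sum_of_subset_of_nonneg (Finset.range_mono hab) fun i _ _ => hw i
  have hW_nonneg (k) : 0 ≤ W k := Finset.sum_nonneg fun i _ => hw i
  obtain ⟨τ, hτ, h0, hdouble⟩ := exists_strictMono_two_mul_le hW
  refine ⟨blockIndex τ, τ, hτ, blockIndex_apply hτ h0, ?_⟩
  have hterm : (fun m => W (τ (m + 1)) * dist (p m) (p (m + 1))) =o[atTop]
      fun m => W (τ (m + 1)) - W (τ m) := by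
    have hbig : (fun m => W (τ (m + 1))) =O[atTop] fun m => W (τ (m + 1)) - W (τ m) := by
      refine .of_bound 2 (.of_forall fun m => ?_)
      rw [Real.norm_of_nonneg (hW_nonneg _),
        Real.norm_of_nonneg (sub_nonneg.2 (hW_mono (hτ m.lt_succ_self).le))]
      linarith [hdouble m]
    simpa using hbig.mul_isLittleO ((Asymptotics.isLittleO_one_iff ℝ).2 hp)
  have hsum := hterm.sum_range (fun m => sub_nonneg.2 (hW_mono (hτ m.lt_succ_self).le)) <| by
    simpa only [Finset.sum_range_sub (fun m => W (τ m)), h0, W, Finset.range_zero,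
      Finset.sum_empty, sub_zero, Function.comp_def] using hW.comp hτ.tendsto_atTop
  simp only [Finset.sum_range_sub (fun m => W (τ m)), h0] at hsum
  refine .trans_le ((Asymptotics.IsBigO.of_norm_le fun k => ?_).trans_isLittleO
    (hsum.comp_tendsto (tendsto_blockIndex_atTop hτ))) fun k => ?_
  · exact norm_sum_smul_sub_le hτ h0 hw p k
  · simp only [Function.comp_apply]
    rw [show W 0 = 0 from rfl, sub_zero, Real.norm_of_nonneg (hW_nonneg _),
      Real.norm_of_nonneg (hW_nonneg _)]
    exact hW_mono (apply_blockIndex_le h0 k)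

theorem exists_seq_mem_forall_mapClusterPt_sum_smul_isLittleO {C : Set E}
    (hC : IsPreconnected C) (hsep : TopologicalSpace.IsSeparable C) (hne : C.Nonempty) {w : ℕ → ℝ}
    (hw : ∀ i, 0 ≤ w i) (hW : Tendsto (fun k => ∑ i ∈ Finset.range k, w i) atTop atTop) :
    ∃ c : ℕ → E, (∀ k, c k ∈ C) ∧ (∀ x ∈ C, MapClusterPt x atTop c) ∧
      (fun k => ∑ i ∈ Finset.range k, w i • c i - (∑ i ∈ Finset.range k, w i) • c k)
        =o[atTop] fun k => ∑ i ∈ Finset.range k, w i := by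
  have := isPreconnected_iff_preconnectedSpace.1 hC
  have := hsep.separableSpace
  have := hne.to_subtype
  obtain ⟨p, hp, hcluster⟩ := exists_seq_dist_succ_tendsto_zero_forall_mapClusterPt C
  obtain ⟨κ, τ, hτ, hκτ, hκ⟩ :=
    exists_slowdown_sum_smul_isLittleO (p := fun t => (p t : E)) hp hw hW
  refine ⟨fun k => p (κ k), fun k => (p _).2, fun x hx => ?_, hκ⟩
  have hx' : MapClusterPt x atTop fun t => (p t : E) :=
    (hcluster ⟨x, hx⟩).continuousAt_comp continuous_subtype_val.continuousAt
  have heq : (fun t => (p t : E)) = (fun k => (p (κ k) : E)) ∘ τ := by ext t; simp [hκτ]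
  exact (heq ▸ hx').of_comp hτ.tendsto_atTop

end SlowWalk

/-! ### Greedy rounding -/

section GreedyRounding

variable {ι : Type*} [Fintype ι]

theorem exists_le_sum_mul_of_mem_stdSimplex {q : ι → ℝ} (hq : q ∈ stdSimplex ℝ ι) (R : ι → ℝ) :
    ∃ a, R a ≤ ∑ j, R j * q j := by
  by_contra! h
  obtain ⟨a, ha⟩ : ∃ a, 0 < q a := by
    by_contra! h0
    linarith [hq.2, Finset.sum_nonpos fun j (_ : j ∈ Finset.univ) => h0 j]
  have hlt : ∑ i, (∑ j, R j * q j) * q i < ∑ i, R i * q i :=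
    Finset.sum_lt_sum (fun i _ => mul_le_mul_of_nonneg_right (h i).le (hq.1 i))
      ⟨a, Finset.mem_univ a, mul_lt_mul_of_pos_right (h a) ha⟩
  rw [← Finset.mul_sum, hq.2, mul_one] at hlt
  exact lt_irrefl _ hlt

variable [DecidableEq ι]

theorem exists_sum_sq_add_mul_single_sub_le {q : ι → ℝ} (hq : q ∈ stdSimplex ℝ ι) (R : ι → ℝ)
    {w : ℝ} (hw : 0 ≤ w) :
    ∃ a, ∑ j, (R j + w * ((Pi.single a 1 : ι → ℝ) j - q j)) ^ 2 ≤ ∑ j, R j ^ 2 + 2 * w ^ 2 := by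
  obtain ⟨a, ha⟩ := exists_le_sum_mul_of_mem_stdSimplex hq R
  refine ⟨a, ?_⟩
  have hsq : ∑ j, ((Pi.single a 1 : ι → ℝ) j - q j) ^ 2 ≤ 2 := by
    calc ∑ j, ((Pi.single a 1 : ι → ℝ) j - q j) ^ 2
        ≤ ∑ j, ((Pi.single a 1 : ι → ℝ) j + q j) := Finset.sum_le_sum fun j _ => by
          have h0 := hq.1 j
          have h1 := (mem_Icc_of_mem_stdSimplex hq j).2
          by_cases hj : j = a
          · subst hj; rw [Pi.single_eq_same]; nlinarith
          · rw [Pi.single_eq_of_ne hj]; nlinarith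
      _ = 2 := by rw [Finset.sum_add_distrib, hq.2, Finset.sum_pi_single']; norm_num
  calc ∑ j, (R j + w * ((Pi.single a 1 : ι → ℝ) j - q j)) ^ 2
      = ∑ j, R j ^ 2 + 2 * w * (R a - ∑ j, R j * q j)
          + w ^ 2 * ∑ j, ((Pi.single a 1 : ι → ℝ) j - q j) ^ 2 := by
        have hRa : R a = ∑ j, R j * (Pi.single a 1 : ι → ℝ) j := by simp [Pi.single_apply]
        rw [hRa, ← Finset.sum_sub_distrib, Finset.mul_sum, Finset.mul_sum,
          ← Finset.sum_add_distrib, ← Finset.sum_add_distrib]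
        exact Finset.sum_congr rfl fun j _ => by ring
    _ ≤ _ := by nlinarith [mul_nonneg hw (sub_nonneg.2 ha), sq_nonneg w]

theorem exists_norm_sum_smul_single_sub_sq_le {w : ℕ → ℝ} (hw : ∀ i, 0 ≤ w i) {q : ℕ → ι → ℝ}
    (hq : ∀ i, q i ∈ stdSimplex ℝ ι) :
    ∃ a : ℕ → ι, ∀ k, ‖∑ i ∈ Finset.range k, w i • (Pi.single (a i) 1 - q i)‖ ^ 2 ≤
      2 * ∑ i ∈ Finset.range k, w i ^ 2 := by
  choose pick hpick using fun i R => exists_sum_sq_add_mul_single_sub_le (hq i) R (hw i)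
  let R : ℕ → ι → ℝ := fun k => Nat.rec 0 (fun i r => r + w i • (Pi.single (pick i r) 1 - q i)) k
  have hR (k) : R k = ∑ i ∈ Finset.range k, w i • (Pi.single (pick i (R i)) 1 - q i) := by
    induction k with
    | zero => rfl
    | succ k ih => rw [Finset.sum_range_succ, ← ih]
  have hR_sq (k) : ∑ j, R k j ^ 2 ≤ 2 * ∑ i ∈ Finset.range k, w i ^ 2 := by
    induction k with
    | zero => simp [R]
    | succ k ih =>
      rw [Finset.sum_range_succ, mul_add]
      exact (hpick k (R k)).trans (by gcongr)
  refine ⟨fun i => pick i (R i), fun k => ?_⟩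
  rw [← hR]
  refine le_trans ((Real.le_sqrt (norm_nonneg _)
    (Finset.sum_nonneg fun j _ => sq_nonneg (R k j))).1 ?_) (hR_sq k)
  refine (pi_norm_le_iff_of_nonneg (Real.sqrt_nonneg _)).2 fun j => Real.le_sqrt_of_sq_le ?_
  rw [Real.norm_eq_abs, sq_abs]
  exact Finset.single_le_sum (f := fun j => R k j ^ 2) (fun _ _ => sq_nonneg _)
    (Finset.mem_univ j)

theorem exists_sum_smul_single_sub_smul_isLittleO {C : Set (ι → ℝ)} (hCS : C ⊆ stdSimplex ℝ ι)
    (hC : IsPreconnected C) (hne : C.Nonempty) {w : ℕ → ℝ} (hw : ∀ i, 0 ≤ w i)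
    (hW : Tendsto (fun k => ∑ i ∈ Finset.range k, w i) atTop atTop)
    (hsq : (fun k => ∑ i ∈ Finset.range k, w i ^ 2) =o[atTop]
      fun k => (∑ i ∈ Finset.range k, w i) ^ 2) :
    ∃ (a : ℕ → ι) (c : ℕ → ι → ℝ), (∀ k, c k ∈ C) ∧ (∀ x ∈ C, MapClusterPt x atTop c) ∧
      (fun k => ∑ i ∈ Finset.range k, w i • Pi.single (a i) 1 -
        (∑ i ∈ Finset.range k, w i) • c k) =o[atTop] fun k => ∑ i ∈ Finset.range k, w i := by
  obtain ⟨c, hcC, hc, hslow⟩ := exists_seq_mem_forall_mapClusterPt_sum_smul_isLittleO hC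
    (TopologicalSpace.IsSeparable.of_separableSpace C) hne hw hW
  obtain ⟨a, ha⟩ := exists_norm_sum_smul_single_sub_sq_le hw fun k => hCS (hcC k)
  have hround : (fun k => ∑ i ∈ Finset.range k, w i • (Pi.single (a i) 1 - c i)) =o[atTop]
      fun k => ∑ i ∈ Finset.range k, w i := by
    refine Asymptotics.IsLittleO.of_norm_left (.of_pow (n := 2) ?_ two_ne_zero)
    refine (Asymptotics.IsBigO.of_bound 2 (.of_forall fun k => ?_)).trans_isLittleO hsq
    simp only [Pi.pow_apply, norm_pow, norm_norm]
    exact (ha k).trans (by gcongr; exact Real.le_norm_self _)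
  refine ⟨a, c, hcC, hc, (hround.add hslow).congr_left fun k => ?_⟩
  simp only [smul_sub, Finset.sum_sub_distrib, sub_add_sub_cancel]

end GreedyRounding

/-! ### Mass distribution on sequence spaces -/

section MassDistribution

variable {G : Type*} [MeasurableSpace G] [MeasurableSingletonClass G]
  {X : Type*}

theorem infinitePi_cylinder_eq_prod (p : PMF G) (ω : ℕ → G) (k : ℕ) :
    Measure.infinitePi (fun _ : ℕ => p.toMeasure) {η | ∀ i < k, η i = ω i} =
      ∏ i ∈ Finset.range k, p (ω i) := by
  have hpi : {η : ℕ → G | ∀ i < k, η i = ω i} =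
      Set.pi (Finset.range k : Set ℕ) fun i => {ω i} := by ext η; simp
  rw [hpi, Measure.infinitePi_pi _ fun i _ => measurableSet_singleton _]
  exact Finset.prod_congr rfl fun i _ =>
    PMF.toMeasure_apply_singleton _ _ (measurableSet_singleton _)

theorem infinitePi_eq_zero_of_forall_eq {p : PMF G} {θ : ℝ≥0∞} (hθ : θ < 1) (hp : ∀ g, p g ≤ θ)
    {B : Set (ℕ → G)} (hB : ∀ ω ∈ B, ∀ η ∈ B, ω = η) :
    Measure.infinitePi (fun _ : ℕ => p.toMeasure) B = 0 := by
  rcases B.eq_empty_or_nonempty with rfl | ⟨ω, hω⟩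
  · exact measure_empty
  refine le_antisymm (ge_of_tendsto' (ENNReal.tendsto_pow_atTop_nhds_zero_of_lt_one hθ)
    fun k => ?_) zero_le
  calc Measure.infinitePi (fun _ : ℕ => p.toMeasure) B
      ≤ Measure.infinitePi (fun _ : ℕ => p.toMeasure) {η | ∀ i < k, η i = ω i} :=
        measure_mono fun η hη i _ => congrFun (hB η hη ω hω) i
    _ = ∏ i ∈ Finset.range k, p (ω i) := infinitePi_cylinder_eq_prod p ω k
    _ ≤ θ ^ k := by
      simpa using Finset.prod_le_prod' (s := Finset.range k) fun i _ => hp (ω i)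

variable [PseudoEMetricSpace X]

theorem infinitePi_preimage_le_mul_ediam_rpow {p : PMF G} {θ : ℝ≥0∞} (hθ : θ < 1)
    (hp : ∀ g, p g ≤ θ) {Φ : (ℕ → G) → X} {K : ℝ≥0∞} {s : ℝ} (hs : 0 ≤ s)
    (hΦ : ∀ (ω η : ℕ → G) (k : ℕ), (∀ i < k, ω i = η i) → ω k ≠ η k →
      ∏ i ∈ Finset.range k, p (ω i) ≤ K * edist (Φ ω) (Φ η) ^ s) (A : Set X) :
    Measure.infinitePi (fun _ : ℕ => p.toMeasure) (Φ ⁻¹' A) ≤ K * Metric.ediam A ^ s := by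
  classical
  by_cases hex : ∃ k, ∃ ω ∈ Φ ⁻¹' A, ∃ η ∈ Φ ⁻¹' A, ω k ≠ η k
  · have hagree : ∀ i < Nat.find hex, ∀ ω ∈ Φ ⁻¹' A, ∀ η ∈ Φ ⁻¹' A, ω i = η i := by
      intro i hi
      simpa only [not_exists, not_and, not_not] using Nat.find_min hex hi
    obtain ⟨ω, hω, η, hη, hne⟩ := Nat.find_spec hex
    calc _ ≤ Measure.infinitePi (fun _ : ℕ => p.toMeasure) {η | ∀ i < Nat.find hex, η i = ω i} :=
          measure_mono fun ζ hζ i hi => hagree i hi ζ hζ ω hω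
      _ = ∏ i ∈ Finset.range (Nat.find hex), p (ω i) := infinitePi_cylinder_eq_prod p ω _
      _ ≤ K * edist (Φ ω) (Φ η) ^ s := hΦ ω η _ (fun i hi => hagree i hi ω hω η hη) hne
      _ ≤ _ := by gcongr; exact Metric.edist_le_ediam_of_mem hω hη
  · simp only [not_exists, not_and, not_not] at hex
    rw [infinitePi_eq_zero_of_forall_eq hθ hp fun ω hω η hη => funext fun k => hex k ω hω η hη]
    exact zero_le

end MassDistribution

theorem le_dimH_range_of_prod_le {G X : Type*} [MeasurableSpace G] [MeasurableSingletonClass G]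
    [EMetricSpace X] [MeasurableSpace X] [BorelSpace X]
    {p : PMF G} {θ : ℝ≥0∞} (hθ : θ < 1) (hp : ∀ g, p g ≤ θ) {Φ : (ℕ → G) → X}
    (hΦm : Measurable Φ) {K : ℝ≥0∞} (hK0 : K ≠ 0) (hK : K ≠ ⊤) (s : NNReal)
    (hΦ : ∀ (ω η : ℕ → G) (k : ℕ), (∀ i < k, ω i = η i) → ω k ≠ η k →
      ∏ i ∈ Finset.range k, p (ω i) ≤ K * edist (Φ ω) (Φ η) ^ (s : ℝ)) :
    (s : ℝ≥0∞) ≤ dimH (range Φ) := by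
  set μ := Measure.infinitePi (fun _ : ℕ => p.toMeasure)
  have hμ_le : K⁻¹ • μ.map Φ ≤ Measure.hausdorffMeasure (s : ℝ) := by
    refine Measure.le_hausdorffMeasure _ _ 1 one_pos fun A _ => ?_
    rw [Measure.smul_apply, smul_eq_mul]
    calc K⁻¹ * μ.map Φ A ≤ K⁻¹ * μ.map Φ (closure A) := by gcongr; exact subset_closure
      _ = K⁻¹ * μ (Φ ⁻¹' closure A) := by
        rw [Measure.map_apply hΦm isClosed_closure.measurableSet]
      _ ≤ K⁻¹ * (K * Metric.ediam (closure A) ^ (s : ℝ)) := by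
        gcongr
        exact infinitePi_preimage_le_mul_ediam_rpow hθ hp s.coe_nonneg hΦ _
      _ = Metric.ediam A ^ (s : ℝ) := by
        rw [Metric.ediam_closure, ← mul_assoc, ENNReal.inv_mul_cancel hK0 hK, one_mul]
  refine le_dimH_of_hausdorffMeasure_ne_zero fun hzero => ?_
  have hmap : 1 ≤ μ.map Φ (range Φ) := by
    refine le_trans ?_ (Measure.le_map_apply hΦm.aemeasurable _)
    rw [preimage_range, measure_univ]
  have hle := hμ_le (range Φ)
  rw [hzero, Measure.smul_apply, smul_eq_mul, nonpos_iff_eq_zero, mul_eq_zero,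
    ENNReal.inv_eq_zero] at hle
  exact hle.elim hK fun h => by simp [h] at hmap

/-! ### Branches -/

/-- The coefficient of the cubic term of each branch of `theMap`. -/
def cubicCoeff : Fin 3 → ℝ := ![18, 72, 18]

/-- The `a`-th branch of `theMap`, extended to the whole real line by the same cubic formula. -/
def branch (a : Fin 3) (x : ℝ) : ℝ := x + cubicCoeff a * (x - theFixedPts a) ^ 3

/-- The interval which the `a`-th branch maps onto `[0, 1]`. -/
def branchDomain (a : Fin 3) : Set ℝ := Icc ((a : ℕ) / 3 : ℝ) (((a : ℕ) + 1) / 3)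

/-- The slope of the chord of the `a`-th branch over `[u, v]`, as a polynomial in `u` and `v`. -/
def branchSlope (a : Fin 3) (u v : ℝ) : ℝ :=
  1 + cubicCoeff a * ((u - theFixedPts a) ^ 2 + (u - theFixedPts a) * (v - theFixedPts a) +
    (v - theFixedPts a) ^ 2)

theorem branch_sub_branch (a : Fin 3) (u v : ℝ) :
    branch a v - branch a u = (v - u) * branchSlope a u v := by
  unfold branch branchSlope; ring

theorem le_cubicCoeff (a : Fin 3) : 18 ≤ cubicCoeff a := by
  fin_cases a <;> norm_num [cubicCoeff]

theorem one_add_mul_sub_sq_le_branchSlope (a : Fin 3) (u v : ℝ) :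
    1 + 9 / 2 * (v - u) ^ 2 ≤ branchSlope a u v := by
  have hcoeff := le_cubicCoeff a
  unfold branchSlope
  nlinarith [mul_nonneg (sub_nonneg.2 hcoeff)
    (add_nonneg (add_nonneg (sq_nonneg (u - theFixedPts a)) (sq_nonneg (v - theFixedPts a)))
      (sq_nonneg (u - theFixedPts a + (v - theFixedPts a)))),
    sq_nonneg (u - theFixedPts a + (v - theFixedPts a))]

theorem one_le_branchSlope (a : Fin 3) (u v : ℝ) : 1 ≤ branchSlope a u v :=
  (le_add_of_nonneg_right (by positivity)).trans (one_add_mul_sub_sq_le_branchSlope a u v)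

theorem strictMono_branch (a : Fin 3) : StrictMono (branch a) := fun u v huv => by
  rw [← sub_pos, branch_sub_branch]
  exact mul_pos (sub_pos.2 huv) (one_pos.trans_le (one_le_branchSlope a u v))

theorem branch_theFixedPts (a : Fin 3) : branch a (theFixedPts a) = theFixedPts a := by
  simp [branch]

theorem sub_le_branch_sub_branch (a : Fin 3) {u v : ℝ} (huv : u ≤ v) :
    v - u ≤ branch a v - branch a u := by
  rw [branch_sub_branch]
  exact le_mul_of_one_le_right (sub_nonneg.2 huv) (one_le_branchSlope a u v)

theorem surjective_branch (a : Fin 3) : Function.Surjective (branch a) := by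
  refine Continuous.surjective (by unfold branch; fun_prop) ?_ ?_
  · refine tendsto_atTop_mono' _ ?_ (tendsto_id (α := ℝ))
    filter_upwards [eventually_ge_atTop (theFixedPts a)] with x hx
    simpa [branch_theFixedPts] using sub_le_branch_sub_branch a hx
  · refine tendsto_atBot_mono' _ ?_ (tendsto_id (α := ℝ))
    filter_upwards [eventually_le_atBot (theFixedPts a)] with x hx
    have h := sub_le_branch_sub_branch a hx
    rw [branch_theFixedPts] at h
    exact (sub_le_sub_iff_left _).1 h

theorem branch_left_endpoint (a : Fin 3) : branch a ((a : ℕ) / 3) = 0 := by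
  fin_cases a <;> norm_num [branch, cubicCoeff, theFixedPts]

theorem branch_right_endpoint (a : Fin 3) : branch a (((a : ℕ) + 1) / 3) = 1 := by
  fin_cases a <;> norm_num [branch, cubicCoeff, theFixedPts, Matrix.vecHead, Matrix.vecTail]

theorem theMap_eq_branch {a : Fin 3} {z : ℝ}
    (hz : z ∈ Ioo ((a : ℕ) / 3 : ℝ) (((a : ℕ) + 1) / 3)) : theMap z = branch a z := by
  obtain ⟨h₁, h₂⟩ := hz
  fin_cases a <;> norm_num at h₁ h₂ <;>
    norm_num [theMap, branch, cubicCoeff, theFixedPts, Matrix.vecHead, Matrix.vecTail]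
  · intro h; linarith
  · rw [if_neg (by linarith), if_pos h₂]
  · rw [if_neg (by linarith), if_neg (by linarith)]

theorem theFixedPts_mem_Icc (a : Fin 3) : theFixedPts a ∈ Icc (0 : ℝ) 1 := by
  fin_cases a <;> norm_num [theFixedPts]

section BranchDomain

variable {a b : Fin 3} {x y z : ℝ}

theorem cubicCoeff_mul_abs_le (hz : z ∈ branchDomain a) :
    cubicCoeff a * |z - theFixedPts a| ≤ 12 := by
  obtain ⟨h₁, h₂⟩ := hz
  rw [← abs_of_nonneg (show 0 ≤ cubicCoeff a by linarith [le_cubicCoeff a]), ← abs_mul, abs_le]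
  fin_cases a <;> norm_num at h₁ h₂ <;> norm_num [cubicCoeff, theFixedPts] <;>
    constructor <;> linarith

theorem cubicCoeff_mul_sq_le (hz : z ∈ branchDomain a) :
    cubicCoeff a * (z - theFixedPts a) ^ 2 ≤ 2 := by
  obtain ⟨h₁, h₂⟩ := hz
  fin_cases a <;> norm_num at h₁ h₂ <;> norm_num [cubicCoeff, theFixedPts] <;> nlinarith

theorem le_cubicCoeff_mul_sq (hab : a ≠ b) (hz : z ∈ branchDomain b) :
    2 ≤ cubicCoeff a * (z - theFixedPts a) ^ 2 := by
  obtain ⟨h₁, h₂⟩ := hz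
  fin_cases a <;> fin_cases b <;> try exact absurd rfl hab
  all_goals norm_num at h₁ h₂; norm_num [cubicCoeff, theFixedPts]; nlinarith

theorem sub_theFixedPts_mul_nonneg (hab : a ≠ b) (hx : x ∈ branchDomain b)
    (hy : y ∈ branchDomain b) : 0 ≤ (x - theFixedPts a) * (y - theFixedPts a) := by
  obtain ⟨h₁, h₂⟩ := hx
  obtain ⟨h₃, h₄⟩ := hy
  fin_cases a <;> fin_cases b <;> try exact absurd rfl hab
  all_goals norm_num at h₁ h₂ h₃ h₄; norm_num [theFixedPts]; nlinarith

theorem branchSlope_le_seven (hx : x ∈ branchDomain a) (hy : y ∈ branchDomain a) :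
    branchSlope a x y ≤ 7 := by
  unfold branchSlope
  have hcoeff := le_cubicCoeff a
  nlinarith [cubicCoeff_mul_sq_le hx, cubicCoeff_mul_sq_le hy,
    mul_nonneg (show 0 ≤ cubicCoeff a by linarith) (sq_nonneg (x - y))]

theorem abs_branchSlope_sub_le {x' y' h : ℝ} (hx : x ∈ branchDomain a) (hy : y ∈ branchDomain a)
    (hx' : x' ∈ branchDomain a) (hy' : y' ∈ branchDomain a) (hxx : |x - x'| ≤ h)
    (hyy : |y - y'| ≤ h) : |branchSlope a x y - branchSlope a x' y'| ≤ 72 * h := by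
  have hcoeff : 0 ≤ cubicCoeff a := by linarith [le_cubicCoeff a]
  set p := theFixedPts a
  have hsplit : branchSlope a x y - branchSlope a x' y' =
      (x - x') * (cubicCoeff a * (x - p) + cubicCoeff a * (x' - p) + cubicCoeff a * (y - p)) +
      (y - y') * (cubicCoeff a * (y - p) + cubicCoeff a * (y' - p) + cubicCoeff a * (x' - p)) := by
    unfold branchSlope; ring
  have hlin {z : ℝ} (hz : z ∈ branchDomain a) : |cubicCoeff a * (z - p)| ≤ 12 := by
    rw [abs_mul, abs_of_nonneg hcoeff]
    exact cubicCoeff_mul_abs_le hz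
  have hthree {u v w : ℝ} (hu : |u| ≤ 12) (hv : |v| ≤ 12) (hw : |w| ≤ 12) : |u + v + w| ≤ 36 := by
    linarith [abs_add_three u v w]
  calc |branchSlope a x y - branchSlope a x' y'| ≤ h * 36 + h * 36 := by
        rw [hsplit]
        refine (abs_add_le _ _).trans (add_le_add ?_ ?_) <;> rw [abs_mul]
        · exact mul_le_mul hxx (hthree (hlin hx) (hlin hx') (hlin hy)) (abs_nonneg _)
            ((abs_nonneg _).trans hxx)
        · exact mul_le_mul hyy (hthree (hlin hy) (hlin hy') (hlin hx')) (abs_nonneg _)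
            ((abs_nonneg _).trans hxx)
    _ = 72 * h := by ring

end BranchDomain

/-- The inverse of the `a`-th branch. -/
def invBranch (a : Fin 3) : ℝ ≃o ℝ :=
  ((strictMono_branch a).orderIsoOfSurjective _ (surjective_branch a)).symm

theorem branch_invBranch (a : Fin 3) (x : ℝ) : branch a (invBranch a x) = x :=
  ((strictMono_branch a).orderIsoOfSurjective _ (surjective_branch a)).apply_symm_apply x

theorem invBranch_branch (a : Fin 3) (x : ℝ) : invBranch a (branch a x) = x :=
  ((strictMono_branch a).orderIsoOfSurjective _ (surjective_branch a)).symm_apply_apply x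

theorem invBranch_theFixedPts (a : Fin 3) : invBranch a (theFixedPts a) = theFixedPts a := by
  conv_lhs => rw [← branch_theFixedPts a, invBranch_branch]

theorem invBranch_zero (a : Fin 3) : invBranch a 0 = (a : ℕ) / 3 := by
  rw [← branch_left_endpoint a, invBranch_branch]

theorem invBranch_one (a : Fin 3) : invBranch a 1 = ((a : ℕ) + 1) / 3 := by
  conv_lhs => rw [← branch_right_endpoint a, invBranch_branch]

theorem sub_eq_invBranch_sub_mul (a : Fin 3) (x y : ℝ) :
    y - x = (invBranch a y - invBranch a x) *
      branchSlope a (invBranch a x) (invBranch a y) := by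
  rw [← branch_sub_branch, branch_invBranch, branch_invBranch]

theorem invBranch_sub_le (a : Fin 3) {x y : ℝ} (hxy : x ≤ y) :
    invBranch a y - invBranch a x ≤ y - x := by
  rw [sub_eq_invBranch_sub_mul a x y]
  exact le_mul_of_one_le_right (sub_nonneg.2 ((invBranch a).monotone hxy))
    (one_le_branchSlope _ _ _)

section InvBranch

variable {a b : Fin 3} {x y : ℝ}

theorem invBranch_mem_branchDomain (hx : x ∈ Icc (0 : ℝ) 1) : invBranch a x ∈ branchDomain a := by
  rw [branchDomain, ← invBranch_zero, ← invBranch_one]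
  exact ⟨(invBranch a).monotone hx.1, (invBranch a).monotone hx.2⟩

theorem invBranch_mem_Ioo_endpoints (hx : x ∈ Ioo (0 : ℝ) 1) :
    invBranch a x ∈ Ioo ((a : ℕ) / 3 : ℝ) (((a : ℕ) + 1) / 3) := by
  rw [← invBranch_zero, ← invBranch_one]
  exact ⟨(invBranch a).strictMono hx.1, (invBranch a).strictMono hx.2⟩

theorem add_one_div_three_le_one (a : Fin 3) : (((a : ℕ) : ℝ) + 1) / 3 ≤ 1 := by
  have : ((a : ℕ) : ℝ) + 1 ≤ 3 := mod_cast a.isLt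
  linarith

theorem invBranch_mem_Icc (hx : x ∈ Icc (0 : ℝ) 1) : invBranch a x ∈ Icc (0 : ℝ) 1 :=
  Icc_subset_Icc (by positivity) (add_one_div_three_le_one a) (invBranch_mem_branchDomain hx)

theorem invBranch_mem_Ioo (hx : x ∈ Ioo (0 : ℝ) 1) : invBranch a x ∈ Ioo (0 : ℝ) 1 :=
  Ioo_subset_Ioo (by positivity) (add_one_div_three_le_one a) (invBranch_mem_Ioo_endpoints hx)

theorem theMap_invBranch (hx : x ∈ Ioo (0 : ℝ) 1) : theMap (invBranch a x) = x := by
  rw [theMap_eq_branch (invBranch_mem_Ioo_endpoints hx), branch_invBranch]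

theorem invBranch_ne_invBranch (hab : a ≠ b) (hx : x ∈ Ioo (0 : ℝ) 1)
    (hy : y ∈ Ioo (0 : ℝ) 1) : invBranch a x ≠ invBranch b y := by
  intro h
  have hax := invBranch_mem_Ioo_endpoints (a := a) hx
  have hby := invBranch_mem_Ioo_endpoints (a := b) hy
  rw [h] at hax
  have h₁ : ((a : ℕ) : ℝ) < (b : ℕ) + 1 := by linarith [hax.1, hby.2]
  have h₂ : ((b : ℕ) : ℝ) < (a : ℕ) + 1 := by linarith [hax.2, hby.1]
  norm_cast at h₁ h₂
  lia

theorem half_le_cubicCoeff_mul_invBranch_sub_sq (hab : a ≠ b) (hx : x ∈ branchDomain b) :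
    1 / 2 ≤ cubicCoeff a * (invBranch a x - theFixedPts a) ^ 2 := by
  by_contra! hlt
  set t := cubicCoeff a * (invBranch a x - theFixedPts a) ^ 2
  have hsq : cubicCoeff a * (x - theFixedPts a) ^ 2 = t * (1 + t) ^ 2 := by
    conv_lhs => rw [← branch_invBranch a x, branch]
    ring
  have ht : 0 ≤ t := mul_nonneg (by linarith [le_cubicCoeff a]) (sq_nonneg _)
  have hmul : t * (1 + t) ^ 2 ≤ 1 / 2 * (1 + 1 / 2) ^ 2 := by gcongr
  linarith [le_cubicCoeff_mul_sq hab hx]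

theorem two_mul_invBranch_sub_le (hab : a ≠ b) (hx : x ∈ branchDomain b) (hy : y ∈ branchDomain b)
    (hxy : x ≤ y) : 2 * (invBranch a y - invBranch a x) ≤ y - x := by
  set p := theFixedPts a
  have hcoeff : 0 ≤ cubicCoeff a := by linarith [le_cubicCoeff a]
  have hfactor (z : ℝ) :
      z - p = (invBranch a z - p) * (1 + cubicCoeff a * (invBranch a z - p) ^ 2) := by
    conv_lhs => rw [← branch_invBranch a z, branch]
    ring
  have hcross : 0 ≤ (invBranch a x - p) * (invBranch a y - p) := by
    have h := sub_theFixedPts_mul_nonneg hab hx hy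
    rw [hfactor x, hfactor y, mul_mul_mul_comm] at h
    exact nonneg_of_mul_nonneg_left h (by positivity)
  have hslope : 2 ≤ branchSlope a (invBranch a x) (invBranch a y) := by
    unfold branchSlope
    linarith [half_le_cubicCoeff_mul_invBranch_sub_sq hab hx,
      half_le_cubicCoeff_mul_invBranch_sub_sq hab hy, mul_nonneg hcoeff hcross]
  rw [sub_eq_invBranch_sub_mul a x y, mul_comm]
  exact mul_le_mul_of_nonneg_left hslope (sub_nonneg.2 ((invBranch a).monotone hxy))

end InvBranch

/-! ### Words and cylinders -/

/-- The inverse branch of an iterate of `theMap` along the word `w`; the first letter is the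
branch visited first. -/
def wordMap (w : List (Fin 3)) (x : ℝ) : ℝ := w.foldr (fun a => invBranch a) x

/-- The length of the cylinder of the word `w`. -/
def cylLength (w : List (Fin 3)) : ℝ := wordMap w 1 - wordMap w 0

section Words

variable {w u v : List (Fin 3)} {x y : ℝ}

theorem wordMap_cons (a : Fin 3) (w : List (Fin 3)) (x : ℝ) :
    wordMap (a :: w) x = invBranch a (wordMap w x) := rfl

theorem wordMap_append (u v : List (Fin 3)) (x : ℝ) :
    wordMap (u ++ v) x = wordMap u (wordMap v x) := List.foldr_append

theorem strictMono_wordMap (w : List (Fin 3)) : StrictMono (wordMap w) := by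
  induction w with
  | nil => exact strictMono_id
  | cons a w ih => exact (invBranch a).strictMono.comp ih

theorem continuous_wordMap (w : List (Fin 3)) : Continuous (wordMap w) := by
  induction w with
  | nil => exact continuous_id
  | cons a w ih => exact (invBranch a).continuous.comp ih

theorem wordMap_mem_Icc (hx : x ∈ Icc (0 : ℝ) 1) : wordMap w x ∈ Icc (0 : ℝ) 1 := by
  induction w with
  | nil => exact hx
  | cons a w ih => exact invBranch_mem_Icc ih

theorem wordMap_mem_Ioo (hx : x ∈ Ioo (0 : ℝ) 1) : wordMap w x ∈ Ioo (0 : ℝ) 1 := by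
  induction w with
  | nil => exact hx
  | cons a w ih => exact invBranch_mem_Ioo ih

theorem wordMap_sub_le (w : List (Fin 3)) (hxy : x ≤ y) :
    wordMap w y - wordMap w x ≤ y - x := by
  induction w with
  | nil => exact le_rfl
  | cons a w ih => exact (invBranch_sub_le a ((strictMono_wordMap w).monotone hxy)).trans ih

theorem cylLength_pos (w : List (Fin 3)) : 0 < cylLength w :=
  sub_pos.2 (strictMono_wordMap w one_pos)

theorem cylLength_le_one (w : List (Fin 3)) : cylLength w ≤ 1 :=
  (wordMap_sub_le w zero_le_one).trans_eq (sub_zero 1)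

theorem cylLength_append_le_right (u v : List (Fin 3)) : cylLength (u ++ v) ≤ cylLength v := by
  rw [cylLength, wordMap_append, wordMap_append]
  exact wordMap_sub_le u ((strictMono_wordMap v).monotone zero_le_one)

theorem abs_wordMap_sub_le_cylLength (hx : x ∈ Icc (0 : ℝ) 1) (hy : y ∈ Icc (0 : ℝ) 1) :
    |wordMap w x - wordMap w y| ≤ cylLength w :=
  have hmono := (strictMono_wordMap w).monotone
  abs_sub_le_of_le_of_le (hmono hx.1) (hmono hx.2) (hmono hy.1) (hmono hy.2)

theorem sum_cylLength_append_singleton (w : List (Fin 3)) :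
    ∑ a, cylLength (w ++ [a]) = cylLength w := by
  have h (a : Fin 3) : cylLength (w ++ [a]) =
      wordMap w (((a : ℕ) + 1) / 3) - wordMap w ((a : ℕ) / 3) := by
    rw [cylLength, wordMap_append, wordMap_append, ← invBranch_zero, ← invBranch_one]
    rfl
  simp only [h, Fin.sum_univ_three]
  norm_num [cylLength]

theorem sum_cylLength_append_ofFn (w : List (Fin 3)) (N : ℕ) :
    ∑ v : Fin N → Fin 3, cylLength (w ++ List.ofFn v) = cylLength w := by
  induction N generalizing w with
  | zero => simp
  | succ N ih =>
    rw [← (Fin.consEquiv fun _ => Fin 3).sum_comp, Fintype.sum_prod_type,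
      ← sum_cylLength_append_singleton]
    refine Finset.sum_congr rfl fun a _ => ?_
    simp [Fin.consEquiv, List.ofFn_succ, ← ih (w ++ [a])]

theorem cylLength_cons_eq (a : Fin 3) (w : List (Fin 3)) :
    cylLength w = cylLength (a :: w) *
      branchSlope a (wordMap (a :: w) 0) (wordMap (a :: w) 1) :=
  sub_eq_invBranch_sub_mul a _ _

theorem length_add_one_mul_cylLength_sq_le (w : List (Fin 3)) :
    (w.length + 1) * cylLength w ^ 2 ≤ 1 := by
  induction w with
  | nil => simp [cylLength, wordMap]
  | cons a w ih =>
    have hpos := cylLength_pos (a :: w)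
    set t := cylLength (a :: w) ^ 2
    have hstep : t * (1 + 9 * t) ≤ cylLength w ^ 2 := by
      have hslope : 1 + 9 / 2 * t ≤ branchSlope a (wordMap (a :: w) 0) (wordMap (a :: w) 1) :=
        one_add_mul_sub_sq_le_branchSlope a _ _
      calc t * (1 + 9 * t) ≤ t * (1 + 9 / 2 * t) ^ 2 := by
            gcongr
            nlinarith [sq_nonneg t]
        _ ≤ cylLength w ^ 2 := by
            rw [cylLength_cons_eq a w, mul_pow]
            gcongr
    by_contra! hlt
    push_cast [List.length_cons] at hlt
    nlinarith [mul_le_mul_of_nonneg_left hstep (by positivity : (0 : ℝ) ≤ w.length + 1)]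

theorem cylLength_le_seven_mul_cylLength_cons (a : Fin 3) (w : List (Fin 3)) :
    cylLength w ≤ 7 * cylLength (a :: w) := by
  rw [cylLength_cons_eq a w, mul_comm]
  refine mul_le_mul_of_nonneg_right (branchSlope_le_seven ?_ ?_) (cylLength_pos _).le
  · exact invBranch_mem_branchDomain (wordMap_mem_Icc (left_mem_Icc.2 zero_le_one))
  · exact invBranch_mem_branchDomain (wordMap_mem_Icc (right_mem_Icc.2 zero_le_one))

theorem two_mul_cylLength_cons_cons_le {a b : Fin 3} (hab : a ≠ b) (w : List (Fin 3)) :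
    2 * cylLength (a :: b :: w) ≤ cylLength (b :: w) := by
  refine two_mul_invBranch_sub_le hab ?_ ?_ ((strictMono_wordMap (b :: w)).monotone zero_le_one)
  · exact invBranch_mem_branchDomain (wordMap_mem_Icc (left_mem_Icc.2 zero_le_one))
  · exact invBranch_mem_branchDomain (wordMap_mem_Icc (right_mem_Icc.2 zero_le_one))

theorem prefix_or_prefix_of_wordMap_eq (hx : x ∈ Ioo (0 : ℝ) 1) (hy : y ∈ Ioo (0 : ℝ) 1)
    (h : wordMap u x = wordMap v y) : u <+: v ∨ v <+: u := by
  induction u generalizing v with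
  | nil => exact .inl List.nil_prefix
  | cons a u ih =>
    cases v with
    | nil => exact .inr List.nil_prefix
    | cons b v =>
      obtain rfl : a = b := by
        by_contra hab
        exact invBranch_ne_invBranch hab (wordMap_mem_Ioo hx) (wordMap_mem_Ioo hy) h
      simpa [List.cons_prefix_cons] using ih ((invBranch a).injective h)

end Words

/-! ### Bounded distortion -/

/-- The sum of the cylinder lengths of all nonempty suffixes of a word. It controls the distortion
of `wordMap`. -/
def suffixLengthSum : List (Fin 3) → ℝ
  | [] => 0
  | a :: w => cylLength (a :: w) + suffixLengthSum w

/-- The inverse branch along `w` contracts no interval of `[0, 1]` by more than the factor `m`. -/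
def IsLowerLipschitz (m : ℝ) (w : List (Fin 3)) : Prop :=
  ∀ ⦃x⦄, x ∈ Icc (0 : ℝ) 1 → ∀ ⦃y⦄, y ∈ Icc (0 : ℝ) 1 → x ≤ y →
    m * (y - x) ≤ wordMap w y - wordMap w x

theorem suffixLengthSum_nonneg (w : List (Fin 3)) : 0 ≤ suffixLengthSum w := by
  induction w with
  | nil => exact le_rfl
  | cons a w ih => exact add_nonneg (cylLength_pos _).le ih

theorem wordMap_sub_mul_le_exp {x y x' y' : ℝ} (hx : x ∈ Icc (0 : ℝ) 1) (hy : y ∈ Icc (0 : ℝ) 1)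
    (hx' : x' ∈ Icc (0 : ℝ) 1) (hy' : y' ∈ Icc (0 : ℝ) 1) (hxy : x ≤ y) (hxy' : x' ≤ y')
    (w : List (Fin 3)) :
    (wordMap w y - wordMap w x) * (y' - x') ≤
      Real.exp (72 * suffixLengthSum w) * ((wordMap w y' - wordMap w x') * (y - x)) := by
  induction w with
  | nil => simp [suffixLengthSum, wordMap, mul_comm]
  | cons a w ih =>
    set L := cylLength (a :: w)
    set D := branchSlope a (wordMap (a :: w) x) (wordMap (a :: w) y)
    set D' := branchSlope a (wordMap (a :: w) x') (wordMap (a :: w) y')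
    have hD : 1 ≤ D := one_le_branchSlope _ _ _
    have hDD' : D' ≤ D * Real.exp (72 * L) := by
      have hmem {z : ℝ} (hz : z ∈ Icc (0 : ℝ) 1) : wordMap (a :: w) z ∈ branchDomain a :=
        invBranch_mem_branchDomain (wordMap_mem_Icc hz)
      have hclose : |D' - D| ≤ 72 * L :=
        abs_branchSlope_sub_le (hmem hx') (hmem hy') (hmem hx) (hmem hy)
          (abs_wordMap_sub_le_cylLength hx' hx) (abs_wordMap_sub_le_cylLength hy' hy)
      calc D' ≤ D + 72 * L := by linarith [le_abs_self (D' - D)]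
        _ ≤ D * (72 * L + 1) := by nlinarith [cylLength_pos (a :: w)]
        _ ≤ D * Real.exp (72 * L) := by gcongr; exact Real.add_one_le_exp _
    have hnonneg : 0 ≤ (wordMap (a :: w) y' - wordMap (a :: w) x') * (y - x) :=
      mul_nonneg (sub_nonneg.2 ((strictMono_wordMap _).monotone hxy')) (sub_nonneg.2 hxy)
    rw [sub_eq_invBranch_sub_mul a (wordMap w x), sub_eq_invBranch_sub_mul a (wordMap w x')] at ih
    refine le_of_mul_le_mul_right ?_ (one_pos.trans_le hD)
    calc (wordMap (a :: w) y - wordMap (a :: w) x) * (y' - x') * D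
        = (wordMap (a :: w) y - wordMap (a :: w) x) * D * (y' - x') := by ring
      _ ≤ Real.exp (72 * suffixLengthSum w) *
            ((wordMap (a :: w) y' - wordMap (a :: w) x') * D' * (y - x)) := ih
      _ = Real.exp (72 * suffixLengthSum w) *
            ((wordMap (a :: w) y' - wordMap (a :: w) x') * (y - x)) * D' := by ring
      _ ≤ Real.exp (72 * suffixLengthSum w) *
            ((wordMap (a :: w) y' - wordMap (a :: w) x') * (y - x)) * (D * Real.exp (72 * L)) := by
          gcongr
      _ = _ := by rw [suffixLengthSum, mul_add, Real.exp_add]; ring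

theorem isLowerLipschitz_exp_mul_cylLength (w : List (Fin 3)) :
    IsLowerLipschitz (Real.exp (-(72 * suffixLengthSum w)) * cylLength w) w := by
  intro x hx y hy hxy
  have h := wordMap_sub_mul_le_exp (left_mem_Icc.2 zero_le_one) (right_mem_Icc.2 zero_le_one)
    hx hy zero_le_one hxy w
  rw [mul_assoc, Real.exp_neg, inv_mul_le_iff₀ (Real.exp_pos _)]
  simpa [cylLength] using h

theorem cylLength_append_le_exp (w u : List (Fin 3)) :
    cylLength (w ++ u) ≤ Real.exp (72 * suffixLengthSum w) * (cylLength w * cylLength u) := by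
  have h := wordMap_sub_mul_le_exp (wordMap_mem_Icc (w := u) (left_mem_Icc.2 zero_le_one))
    (wordMap_mem_Icc (w := u) (right_mem_Icc.2 zero_le_one)) (left_mem_Icc.2 zero_le_one)
    (right_mem_Icc.2 zero_le_one) ((strictMono_wordMap u).monotone zero_le_one) zero_le_one w
  simpa [cylLength, wordMap_append] using h

theorem cylLength_append_add_cylLength_append_le {a b : Fin 3} (hab : a ≠ b)
    (w : List (Fin 3)) : cylLength (w ++ [a]) + cylLength (w ++ [b]) ≤ cylLength w := by
  rw [← sum_cylLength_append_singleton w,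
    ← Finset.sum_pair (f := fun c => cylLength (w ++ [c])) hab]
  exact Finset.sum_le_sum_of_subset_of_nonneg (Finset.subset_univ _)
    fun c _ _ => (cylLength_pos _).le

theorem suffixLengthSum_replicate_append_singleton_le {a b : Fin 3} (hab : a ≠ b) (n : ℕ) :
    suffixLengthSum (List.replicate n a ++ [b]) ≤ 1 := by
  suffices h : suffixLengthSum (List.replicate n a ++ [b]) +
      cylLength (List.replicate (n + 1) a) ≤ 1 by
    linarith [cylLength_pos (List.replicate (n + 1) a)]
  induction n with
  | zero =>
    simpa [suffixLengthSum, cylLength, wordMap] using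
      cylLength_append_add_cylLength_append_le hab.symm []
  | succ n ih =>
    have hsplit := cylLength_append_add_cylLength_append_le hab (List.replicate (n + 1) a)
    rw [← List.replicate_succ'] at hsplit
    have hsum : suffixLengthSum (List.replicate (n + 1) a ++ [b]) =
        cylLength (List.replicate (n + 1) a ++ [b]) +
          suffixLengthSum (List.replicate n a ++ [b]) := rfl
    linarith

theorem suffixLengthSum_replicate_append_cons_le {a b : Fin 3} (hab : a ≠ b) (n : ℕ)
    (u : List (Fin 3)) :
    suffixLengthSum (List.replicate n a ++ b :: u) ≤
      suffixLengthSum (b :: u) + 7 * Real.exp 72 * cylLength (b :: u) := by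
  suffices h : suffixLengthSum (List.replicate n a ++ b :: u) ≤ suffixLengthSum (b :: u) +
      7 * Real.exp 72 * cylLength (b :: u) * suffixLengthSum (List.replicate n a ++ [b]) by
    refine h.trans (add_le_add_right (mul_le_of_le_one_right ?_
      (suffixLengthSum_replicate_append_singleton_le hab n)) _)
    exact mul_nonneg (by positivity) (cylLength_pos _).le
  induction n with
  | zero =>
    exact le_add_of_nonneg_right
      (mul_nonneg (mul_nonneg (by positivity) (cylLength_pos _).le) (suffixLengthSum_nonneg _))
  | succ n ih =>
    have hlen : cylLength (List.replicate (n + 1) a ++ b :: u) ≤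
        7 * Real.exp 72 * cylLength (b :: u) * cylLength (List.replicate (n + 1) a ++ [b]) := by
      have hS := suffixLengthSum_replicate_append_singleton_le hab (n + 1)
      have hpos := cylLength_pos (List.replicate (n + 1) a ++ [b])
      have hu := cylLength_pos u
      calc cylLength (List.replicate (n + 1) a ++ b :: u)
          = cylLength ((List.replicate (n + 1) a ++ [b]) ++ u) := by
            rw [List.append_assoc, List.singleton_append]
        _ ≤ Real.exp (72 * suffixLengthSum (List.replicate (n + 1) a ++ [b])) *
              (cylLength (List.replicate (n + 1) a ++ [b]) * cylLength u) :=
            cylLength_append_le_exp _ u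
        _ ≤ Real.exp 72 * (cylLength (List.replicate (n + 1) a ++ [b]) *
              (7 * cylLength (b :: u))) := by
            gcongr
            · linarith
            · exact cylLength_le_seven_mul_cylLength_cons b u
        _ = _ := by ring
    calc suffixLengthSum (List.replicate (n + 1) a ++ b :: u)
        = cylLength (List.replicate (n + 1) a ++ b :: u) +
            suffixLengthSum (List.replicate n a ++ b :: u) := rfl
      _ ≤ _ := add_le_add hlen ih
      _ = suffixLengthSum (b :: u) + 7 * Real.exp 72 * cylLength (b :: u) *
            (cylLength (List.replicate (n + 1) a ++ [b]) +
              suffixLengthSum (List.replicate n a ++ [b])) := by ring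

theorem two_mul_cylLength_replicate_append_cons_le {a b : Fin 3} (hab : a ≠ b) (n : ℕ)
    (u : List (Fin 3)) :
    2 * cylLength (List.replicate (n + 1) a ++ b :: u) ≤ cylLength (b :: u) := by
  refine le_trans ?_ (two_mul_cylLength_cons_cons_le hab u)
  rw [List.replicate_succ', List.append_assoc, List.singleton_append]
  exact mul_le_mul_of_nonneg_left (cylLength_append_le_right _ _) zero_le_two

/-- The constant bounding the distortion of all words ending in two different letters. -/
def distortionConst : ℝ := 1 + 14 * Real.exp 72

/-- Cut the word into its maximal runs, read from the right: prepending a run costs at most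
`7 * exp 72` times the current cylinder length, and at least halves that length. -/
theorem suffixLengthSum_append_pair_le {a b : Fin 3} (hab : a ≠ b) (v : List (Fin 3)) :
    suffixLengthSum (v ++ [a, b]) ≤ distortionConst := by
  let P (w : List (Fin 3)) : Prop :=
    suffixLengthSum w + 14 * Real.exp 72 * cylLength w ≤ distortionConst
  have hP {n : ℕ} {c d : Fin 3} {u : List (Fin 3)} (hcd : c ≠ d) (hu : u = [] ∨ P (d :: u)) :
      P (List.replicate (n + 1) c ++ d :: u) := by
    have hexp := Real.exp_pos 72
    rcases hu with rfl | hu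
    · have hS := suffixLengthSum_replicate_append_singleton_le hcd (n + 1)
      have hlen := cylLength_le_one (List.replicate (n + 1) c ++ [d])
      simp only [P, distortionConst]
      nlinarith
    · have hS := suffixLengthSum_replicate_append_cons_le hcd (n + 1) u
      have hlen := two_mul_cylLength_replicate_append_cons_le hcd n u
      simp only [P] at hu ⊢
      nlinarith
  obtain ⟨n, c, d, u, hw, hcd, hu⟩ : ∃ (n : ℕ) (c d : Fin 3) (u : List (Fin 3)),
      v ++ [a, b] = List.replicate (n + 1) c ++ d :: u ∧ c ≠ d ∧ (u = [] ∨ P (d :: u)) := by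
    induction v with
    | nil => exact ⟨0, a, b, [], rfl, hab, .inl rfl⟩
    | cons e v ih =>
      obtain ⟨n, c, d, u, hw, hcd, hu⟩ := ih
      by_cases hec : e = c
      · exact ⟨n + 1, c, d, u, by rw [List.cons_append, hw, hec]; rfl, hcd, hu⟩
      · exact ⟨0, e, c, List.replicate n c ++ d :: u, by rw [List.cons_append, hw]; rfl, hec,
          .inr (hP hcd hu)⟩
  have h := hP (n := n) hcd hu
  rw [← hw] at h
  exact (le_add_of_nonneg_right (mul_nonneg (by positivity) (cylLength_pos _).le)).trans h

theorem isLowerLipschitz_append_pair {a b : Fin 3} (hab : a ≠ b) (v : List (Fin 3)) :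
    IsLowerLipschitz (Real.exp (-(72 * distortionConst)) * cylLength (v ++ [a, b]))
      (v ++ [a, b]) := by
  intro x hx y hy hxy
  refine le_trans ?_ (isLowerLipschitz_exp_mul_cylLength _ hx hy hxy)
  have hpos := cylLength_pos (v ++ [a, b])
  have hS := suffixLengthSum_append_pair_le hab v
  have := sub_nonneg.2 hxy
  gcongr

section IsLowerLipschitz

variable {m m' : ℝ} {u v : List (Fin 3)}

theorem isLowerLipschitz_append (hm : 0 ≤ m) (hu : IsLowerLipschitz m u)
    (hv : IsLowerLipschitz m' v) : IsLowerLipschitz (m * m') (u ++ v) := by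
  intro x hx y hy hxy
  rw [wordMap_append, wordMap_append, mul_assoc]
  exact (mul_le_mul_of_nonneg_left (hv hx hy hxy) hm).trans
    (hu (wordMap_mem_Icc hx) (wordMap_mem_Icc hy) ((strictMono_wordMap v).monotone hxy))

theorem isLowerLipschitz_nil : IsLowerLipschitz 1 [] := fun _ _ _ _ _ => (one_mul _).le

theorem isLowerLipschitz_singleton (a : Fin 3) : IsLowerLipschitz 7⁻¹ [a] := by
  intro x hx y hy hxy
  rw [inv_mul_le_iff₀ (by norm_num), sub_eq_invBranch_sub_mul a x y, mul_comm]
  exact mul_le_mul_of_nonneg_right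
    (branchSlope_le_seven (invBranch_mem_branchDomain hx) (invBranch_mem_branchDomain hy))
    (sub_nonneg.2 ((invBranch a).monotone hxy))

theorem mul_abs_sub_le_of_isLowerLipschitz (hu : IsLowerLipschitz m u) {x y : ℝ}
    (hx : x ∈ Icc (0 : ℝ) 1) (hy : y ∈ Icc (0 : ℝ) 1) :
    m * |x - y| ≤ |wordMap u x - wordMap u y| := by
  wlog hxy : x ≤ y generalizing x y
  · rw [abs_sub_comm x, abs_sub_comm (wordMap u x)]
    exact this hy hx (le_of_not_ge hxy)
  · rw [abs_sub_comm x, abs_sub_comm (wordMap u x), abs_of_nonneg (sub_nonneg.2 hxy),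
      abs_of_nonneg (sub_nonneg.2 ((strictMono_wordMap u).monotone hxy))]
    exact hu hx hy hxy

end IsLowerLipschitz

theorem wordMap_replicate_theFixedPts (n : ℕ) (a : Fin 3) :
    wordMap (List.replicate n a) (theFixedPts a) = theFixedPts a := by
  induction n with
  | zero => rfl
  | succ n ih => rw [List.replicate_succ, wordMap_cons, ih, invBranch_theFixedPts]

theorem mul_wordMap_replicate_sub_sq_le {x : ℝ} (hx : x ∈ Icc (0 : ℝ) 1) (n : ℕ) (a : Fin 3) :
    (n + 1) * (wordMap (List.replicate n a) x - theFixedPts a) ^ 2 ≤ 1 := by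
  have hdist := abs_wordMap_sub_le_cylLength (w := List.replicate n a) hx (theFixedPts_mem_Icc a)
  rw [wordMap_replicate_theFixedPts] at hdist
  refine le_trans ?_ (length_add_one_mul_cylLength_sq_le (List.replicate n a))
  rw [List.length_replicate, ← sq_abs (_ - _)]
  gcongr

theorem cubicCoeff_le (a : Fin 3) : cubicCoeff a ≤ 72 := by
  fin_cases a <;> norm_num [cubicCoeff]

theorem branchSlope_replicate_le {x y : ℝ} (hx : x ∈ Icc (0 : ℝ) 1) (hy : y ∈ Icc (0 : ℝ) 1)
    (n : ℕ) (a : Fin 3) :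
    branchSlope a (wordMap (List.replicate (n + 1) a) x) (wordMap (List.replicate (n + 1) a) y) ≤
      (((n : ℝ) + 2) / (n + 1)) ^ 216 := by
  have hX := mul_wordMap_replicate_sub_sq_le hx (n + 1) a
  have hY := mul_wordMap_replicate_sub_sq_le hy (n + 1) a
  rw [branchSlope]
  set X := wordMap (List.replicate (n + 1) a) x - theFixedPts a
  set Y := wordMap (List.replicate (n + 1) a) y - theFixedPts a
  have hsum : X ^ 2 + X * Y + Y ^ 2 ≤ 3 / (n + 1) := by
    rw [le_div_iff₀ (by positivity)]
    push_cast at hX hY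
    nlinarith [sq_nonneg (X - Y), (Nat.cast_nonneg n : (0 : ℝ) ≤ n)]
  calc 1 + cubicCoeff a * (X ^ 2 + X * Y + Y ^ 2) ≤ 1 + 72 * (3 / (n + 1)) := by
        have hquad : 0 ≤ X ^ 2 + X * Y + Y ^ 2 := by nlinarith [sq_nonneg (X + Y)]
        gcongr
        exact cubicCoeff_le a
    _ = 1 + (216 : ℕ) * (1 / ((n : ℝ) + 1)) := by push_cast; ring
    _ ≤ (1 + 1 / ((n : ℝ) + 1)) ^ 216 :=
        one_add_mul_le_pow ((by norm_num : (-2 : ℝ) ≤ 0).trans (by positivity)) 216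
    _ = (((n : ℝ) + 2) / (n + 1)) ^ 216 := by
        rw [one_add_div (by positivity)]
        congr 2
        ring

theorem isLowerLipschitz_replicate (n : ℕ) (a : Fin 3) :
    IsLowerLipschitz (((n : ℝ) + 1) ^ 216)⁻¹ (List.replicate n a) := by
  induction n with
  | zero => simpa using isLowerLipschitz_nil
  | succ n ih =>
    intro x hx y hy hxy
    set Δ := wordMap (List.replicate (n + 1) a) y - wordMap (List.replicate (n + 1) a) x
    have hΔ : 0 ≤ Δ := sub_nonneg.2 ((strictMono_wordMap _).monotone hxy)
    have hr : 0 < ((n : ℝ) + 2) / (n + 1) := by positivity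
    set r := ((n : ℝ) + 2) / (n + 1)
    have hbase : ((n + 1 : ℕ) : ℝ) + 1 = r * ((n : ℝ) + 1) := by
      rw [div_mul_cancel₀ _ (by positivity)]
      push_cast
      ring
    calc ((((n + 1 : ℕ) : ℝ) + 1) ^ 216)⁻¹ * (y - x)
        = (r ^ 216)⁻¹ * ((((n : ℝ) + 1) ^ 216)⁻¹ * (y - x)) := by
          rw [hbase, mul_pow, mul_inv, mul_assoc]
      _ ≤ (r ^ 216)⁻¹ * (Δ * r ^ 216) := by
          refine mul_le_mul_of_nonneg_left ((ih hx hy hxy).trans ?_) (by positivity)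
          rw [sub_eq_invBranch_sub_mul a]
          exact mul_le_mul_of_nonneg_left (branchSlope_replicate_le hx hy n a) hΔ
      _ = Δ := by rw [mul_comm, mul_inv_cancel_right₀ (by positivity)]

/-! ### A separated alphabet of large dimension -/

/-- The index set of the stopping words: an arbitrary initial word of length `N`, a letter which is
then repeated, its number of repetitions minus one, and one of the two letters that may end
the run. -/
abbrev StoppingIndex (N T : ℕ) : Type := (Fin N → Fin 3) × Fin 3 × Fin T × Fin 2

/-- The word made of an initial word of fixed length, followed by a bounded run of one letter which
is broken off by a different letter. -/
def stoppingWord {N T : ℕ} : StoppingIndex N T → List (Fin 3)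
  | (v, a, j, c) => List.ofFn v ++ (List.replicate (j + 1) a ++ [a.succAbove c])

theorem replicate_append_cons_inj {α : Type*} {a b b' : α} (hb : b ≠ a) (hb' : b' ≠ a) {j j' : ℕ}
    {t t' : List α} (h : List.replicate j a ++ b :: t = List.replicate j' a ++ b' :: t') :
    j = j' ∧ b = b' := by
  induction j generalizing j' with
  | zero =>
    cases j' with
    | zero => exact ⟨rfl, (List.cons.inj h).1⟩
    | succ j' => exact absurd (List.cons.inj h).1 hb
  | succ j ih =>
    cases j' with
    | zero => exact absurd (List.cons.inj h).1.symm hb'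
    | succ j' => exact (ih (List.cons.inj h).2).imp_left (congrArg _)

theorem eq_of_stoppingWord_prefix {N T : ℕ} {g h : StoppingIndex N T}
    (hgh : stoppingWord g <+: stoppingWord h) : g = h := by
  obtain ⟨v, a, j, c⟩ := g
  obtain ⟨v', a', j', c'⟩ := h
  obtain ⟨t, ht⟩ := hgh
  simp only [stoppingWord, List.append_assoc, List.singleton_append] at ht
  obtain ⟨hv, htail⟩ := List.append_inj ht (by simp)
  obtain rfl := List.ofFn_injective hv
  obtain rfl : a = a' := (List.cons.inj htail).1
  obtain ⟨hj, hc⟩ := replicate_append_cons_inj (Fin.succAbove_ne a c) (Fin.succAbove_ne a c') htail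
  obtain rfl : j = j' := Fin.ext (by simpa using hj)
  obtain rfl := Fin.succAbove_right_injective hc
  rfl

theorem sum_cylLength_append_succAbove (w : List (Fin 3)) (a : Fin 3) :
    ∑ c, cylLength (w ++ [a.succAbove c]) = cylLength w - cylLength (w ++ [a]) := by
  rw [← sum_cylLength_append_singleton w, Fin.sum_univ_succAbove _ a, add_sub_cancel_left]

theorem sum_cylLength_run (w : List (Fin 3)) (a : Fin 3) (T : ℕ) :
    ∑ j : Fin T, ∑ c, cylLength (w ++ (List.replicate (j + 1) a ++ [a.succAbove c])) =
      cylLength (w ++ [a]) - cylLength (w ++ List.replicate (T + 1) a) := by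
  have hstep (j : ℕ) : ∑ c, cylLength (w ++ (List.replicate (j + 1) a ++ [a.succAbove c])) =
      cylLength (w ++ List.replicate (j + 1) a) -
        cylLength (w ++ List.replicate (j + 1 + 1) a) := by
    simp only [← List.append_assoc, sum_cylLength_append_succAbove]
    rw [List.append_assoc, ← List.replicate_succ']
  simp only [hstep]
  rw [Fin.sum_univ_eq_sum_range fun j => cylLength (w ++ List.replicate (j + 1) a) -
    cylLength (w ++ List.replicate (j + 1 + 1) a), Finset.sum_range_sub']
  rfl

theorem sum_cylLength_stoppingWord (N T : ℕ) :
    ∑ g : StoppingIndex N T, cylLength (stoppingWord g) =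
      1 - ∑ v : Fin N → Fin 3, ∑ a, cylLength (List.ofFn v ++ List.replicate (T + 1) a) := by
  simp only [StoppingIndex, Fintype.sum_prod_type, stoppingWord, sum_cylLength_run,
    Finset.sum_sub_distrib, sum_cylLength_append_singleton]
  have htotal := sum_cylLength_append_ofFn [] N
  simp only [List.nil_append] at htotal
  rw [htotal]
  simp [cylLength, wordMap]

theorem cylLength_le_rpow {w : List (Fin 3)} {n : ℕ} (hn : n ≤ w.length) :
    cylLength w ≤ ((n : ℝ) + 1) ^ (-(1 / 2) : ℝ) := by
  have hpos := cylLength_pos w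
  have hsq : cylLength w ^ 2 ≤ ((n : ℝ) + 1)⁻¹ := by
    rw [le_inv_comm₀ (by positivity) (by positivity), ← one_div, le_div_iff₀ (by positivity)]
    refine le_trans ?_ (length_add_one_mul_cylLength_sq_le w)
    gcongr
  rw [Real.rpow_neg (by positivity), ← Real.inv_rpow (by positivity), ← Real.sqrt_eq_rpow]
  exact Real.le_sqrt_of_sq_le hsq

theorem tendsto_natCast_add_one_rpow_neg_half :
    Tendsto (fun n : ℕ => ((n : ℝ) + 1) ^ (-(1 / 2) : ℝ)) atTop (𝓝 0) :=
  (tendsto_rpow_neg_atTop (by norm_num)).comp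
    (tendsto_atTop_add_const_right _ _ tendsto_natCast_atTop_atTop)

theorem exists_half_le_sum_cylLength_stoppingWord (N : ℕ) :
    ∃ T, 1 / 2 ≤ ∑ g : StoppingIndex N T, cylLength (stoppingWord g) := by
  have hlim : Tendsto (fun T : ℕ =>
      ∑ v : Fin N → Fin 3, ∑ a, cylLength (List.ofFn v ++ List.replicate (T + 1) a))
      atTop (𝓝 0) := by
    rw [← Finset.sum_const_zero (s := (Finset.univ : Finset (Fin N → Fin 3)))]
    refine tendsto_finsetSum _ fun v _ => ?_
    rw [← Finset.sum_const_zero (s := (Finset.univ : Finset (Fin 3)))]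
    refine tendsto_finsetSum _ fun a _ => ?_
    exact squeeze_zero (fun T => (cylLength_pos _).le)
      (fun T => cylLength_le_rpow (by simp; lia)) tendsto_natCast_add_one_rpow_neg_half
  obtain ⟨T, hT⟩ := (hlim.eventually_le_const (by norm_num : (0 : ℝ) < 1 / 2)).exists
  exact ⟨T, by rw [sum_cylLength_stoppingWord]; linarith⟩

/-- Cylinders of long words are short, so lowering the exponent below `1` makes the sum of powers
large. -/
theorem exists_one_le_sum_mul_cylLength_rpow {s : ℝ} (hs : s < 1) {κ : ℝ} (hκ : 0 < κ) :
    ∃ N T, 1 ≤ ∑ g : StoppingIndex N T, (κ * cylLength (stoppingWord g)) ^ s := by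
  have hlim : Tendsto (fun N : ℕ => (((N : ℝ) + 1) ^ (-(1 / 2) : ℝ)) ^ (s - 1)) atTop atTop := by
    refine ((tendsto_rpow_atTop (by linarith : 0 < (1 - s) / 2)).comp
      (tendsto_atTop_add_const_right _ 1 tendsto_natCast_atTop_atTop)).congr fun N => ?_
    rw [Function.comp_apply, ← Real.rpow_mul (by positivity)]
    congr 1
    ring
  obtain ⟨N, hN⟩ := (hlim.eventually_ge_atTop (2 * (κ ^ s)⁻¹)).exists
  obtain ⟨T, hT⟩ := exists_half_le_sum_cylLength_stoppingWord N
  refine ⟨N, T, ?_⟩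
  have := Real.rpow_pos_of_pos hκ s
  have hterm (g : StoppingIndex N T) :
      2 * cylLength (stoppingWord g) ≤ (κ * cylLength (stoppingWord g)) ^ s := by
    have hpos := cylLength_pos (stoppingWord g)
    have hle := cylLength_le_rpow (n := N) (w := stoppingWord g) (by simp [stoppingWord])
    calc 2 * cylLength (stoppingWord g)
        = κ ^ s * (2 * (κ ^ s)⁻¹) * cylLength (stoppingWord g) := by field_simp
      _ ≤ κ ^ s * cylLength (stoppingWord g) ^ (s - 1) * cylLength (stoppingWord g) := by
          gcongr
          exact hN.trans (Real.rpow_le_rpow_of_nonpos hpos hle (by linarith))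
      _ = (κ * cylLength (stoppingWord g)) ^ s := by
          rw [Real.mul_rpow hκ.le hpos.le, mul_assoc, Real.rpow_sub_one hpos.ne',
            div_mul_cancel₀ _ hpos.ne']
  calc (1 : ℝ) ≤ ∑ g : StoppingIndex N T, 2 * cylLength (stoppingWord g) := by
        rw [← Finset.mul_sum]; linarith
    _ ≤ _ := Finset.sum_le_sum fun g _ => hterm g

theorem exists_pos_le_dist_of_pairwise_disjoint {ι X : Type*} [Finite ι] [MetricSpace X]
    {A : ι → Set X} (hA : ∀ i, IsCompact (A i)) (hdisj : Pairwise fun i j => Disjoint (A i) (A j)) :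
    ∃ c > 0, ∀ i j, i ≠ j → ∀ x ∈ A i, ∀ y ∈ A j, c ≤ dist x y := by
  have hpair (i j : ι) : ∃ c > 0, i ≠ j → ∀ x ∈ A i, ∀ y ∈ A j, c ≤ dist x y := by
    by_cases hij : i = j
    · exact ⟨1, one_pos, fun h => absurd hij h⟩
    · obtain ⟨c, hc, h⟩ := Metric.exists_pos_forall_lt_edist (hA i) (hA j).isClosed (hdisj hij)
      refine ⟨c, hc, fun _ x hx y hy => ?_⟩
      have hlt := h x hx y hy
      rw [edist_nndist, ENNReal.coe_lt_coe] at hlt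
      exact mod_cast hlt.le
  choose c hc h using hpair
  rcases isEmpty_or_nonempty ι with _ | _
  · exact ⟨1, one_pos, fun i => isEmptyElim i⟩
  · obtain ⟨⟨i₀, j₀⟩, hmin⟩ := Finite.exists_min fun p : ι × ι => c p.1 p.2
    exact ⟨c i₀ j₀, hc i₀ j₀, fun i j hij x hx y hy => (hmin (i, j)).trans (h i j hij x hx y hy)⟩

/-- A finite family of words whose inverse branches map `[0, 1]` to sets at mutual distance at
least `c`, and contract by at most the factors `r g < 1`: the data for a self-similar
construction. -/
structure IsSeparatedAlphabet {G : Type*} (w : G → List (Fin 3)) (r : G → ℝ) (c : ℝ) : Prop where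
  ratio_pos (g : G) : 0 < r g
  ratio_lt_one (g : G) : r g < 1
  isLowerLipschitz (g : G) : IsLowerLipschitz (r g) (w g)
  gap_pos : 0 < c
  gap_le {g h : G} (hgh : g ≠ h) {x y : ℝ} (hx : x ∈ Icc (0 : ℝ) 1) (hy : y ∈ Icc (0 : ℝ) 1) :
    c ≤ |wordMap (w g) x - wordMap (w h) y|

theorem invBranch_one_mem_Ioo {x : ℝ} (hx : x ∈ Icc (0 : ℝ) 1) : invBranch 1 x ∈ Ioo (0 : ℝ) 1 := by
  have h := invBranch_mem_branchDomain (a := 1) hx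
  norm_num [branchDomain] at h
  exact ⟨by linarith, by linarith⟩

theorem wordMap_stoppingWord_append_ne {N T : ℕ} {g h : StoppingIndex N T} (hgh : g ≠ h) {x y : ℝ}
    (hx : x ∈ Icc (0 : ℝ) 1) (hy : y ∈ Icc (0 : ℝ) 1) :
    wordMap (stoppingWord g ++ [1]) x ≠ wordMap (stoppingWord h ++ [1]) y := by
  rw [wordMap_append, wordMap_append]
  intro heq
  rcases prefix_or_prefix_of_wordMap_eq (invBranch_one_mem_Ioo hx) (invBranch_one_mem_Ioo hy) heq
    with hpre | hpre
  · exact hgh (eq_of_stoppingWord_prefix hpre)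
  · exact hgh (eq_of_stoppingWord_prefix hpre).symm

theorem exists_gap_stoppingWord (N T : ℕ) :
    ∃ c > 0, ∀ g h : StoppingIndex N T, g ≠ h → ∀ x ∈ Icc (0 : ℝ) 1, ∀ y ∈ Icc (0 : ℝ) 1,
      c ≤ |wordMap (stoppingWord g ++ [1]) x - wordMap (stoppingWord h ++ [1]) y| := by
  obtain ⟨c, hc, hgap⟩ := exists_pos_le_dist_of_pairwise_disjoint
    (A := fun g : StoppingIndex N T => wordMap (stoppingWord g ++ [1]) '' Icc 0 1)
    (fun g => isCompact_Icc.image (continuous_wordMap _)) fun g h hgh => by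
      refine Set.disjoint_left.2 ?_
      rintro _ ⟨x, hx, rfl⟩ ⟨y, hy, hxy⟩
      exact wordMap_stoppingWord_append_ne hgh hx hy hxy.symm
  exact ⟨c, hc, fun g h hgh x hx y hy =>
    hgap g h hgh _ (mem_image_of_mem _ hx) _ (mem_image_of_mem _ hy)⟩

theorem isLowerLipschitz_stoppingWord {N T : ℕ} (g : StoppingIndex N T) :
    IsLowerLipschitz (Real.exp (-(72 * distortionConst)) * cylLength (stoppingWord g))
      (stoppingWord g) := by
  obtain ⟨v, a, j, c⟩ := g
  have hpair : stoppingWord (v, a, j, c) =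
      (List.ofFn v ++ List.replicate j a) ++ [a, a.succAbove c] := by
    simp only [stoppingWord, List.replicate_succ', List.append_assoc]
    rfl
  rw [hpair]
  exact isLowerLipschitz_append_pair (Fin.succAbove_ne a c).symm _

theorem exists_isSeparatedAlphabet {s : ℝ} (hs : s < 1) :
    ∃ (N T : ℕ) (r : StoppingIndex N T → ℝ) (c : ℝ),
      IsSeparatedAlphabet (fun g => stoppingWord g ++ [1]) r c ∧ 1 ≤ ∑ g, r g ^ s := by
  set κ := Real.exp (-(72 * distortionConst)) with hκ
  have hκ_pos : 0 < κ := Real.exp_pos _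
  have hκ_le : κ ≤ 1 := by
    rw [hκ, Real.exp_le_one_iff, distortionConst]
    linarith [Real.exp_pos 72]
  obtain ⟨N, T, hsum⟩ := exists_one_le_sum_mul_cylLength_rpow hs (by positivity : 0 < κ * 7⁻¹)
  obtain ⟨c, hc, hgap⟩ := exists_gap_stoppingWord N T
  refine ⟨N, T, fun g => κ * 7⁻¹ * cylLength (stoppingWord g), c, ⟨fun g => ?_, fun g => ?_,
    fun g => ?_, hc, fun hgh _ _ hx hy => hgap _ _ hgh _ hx _ hy⟩, hsum⟩
  · exact mul_pos (by positivity) (cylLength_pos _)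
  · nlinarith [cylLength_pos (stoppingWord g), cylLength_le_one (stoppingWord g)]
  · rw [mul_right_comm]
    exact isLowerLipschitz_append (mul_nonneg hκ_pos.le (cylLength_pos _).le)
      (isLowerLipschitz_stoppingWord g) (isLowerLipschitz_singleton 1)

/-! ### Coding by infinite concatenations -/

/-- The concatenation of the first `m` words of the sequence `b`. -/
def blockPrefix (b : ℕ → List (Fin 3)) (m : ℕ) : List (Fin 3) := (List.range m).flatMap b

/-- The point coded by the infinite concatenation of the words `b 0, b 1, …`. -/
def codePoint (b : ℕ → List (Fin 3)) : ℝ := ⨆ m, wordMap (blockPrefix b m) 0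

section CodePoint

variable {b b' : ℕ → List (Fin 3)}

theorem blockPrefix_add (b : ℕ → List (Fin 3)) (k m : ℕ) :
    blockPrefix b (k + m) = blockPrefix b k ++ blockPrefix (fun i => b (k + i)) m := by
  rw [blockPrefix, List.range_add, List.flatMap_append, List.flatMap_map, ← blockPrefix,
    ← blockPrefix]

theorem blockPrefix_succ (b : ℕ → List (Fin 3)) (k : ℕ) :
    blockPrefix b (k + 1) = blockPrefix b k ++ b k := by
  rw [blockPrefix, List.range_succ, List.flatMap_append, List.flatMap_singleton, ← blockPrefix]

theorem blockPrefix_congr {m : ℕ} (h : ∀ i < m, b i = b' i) : blockPrefix b m = blockPrefix b' m :=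
  List.flatMap_congr fun i hi => h i (List.mem_range.1 hi)

theorem wordMap_blockPrefix_mem_Icc (b : ℕ → List (Fin 3)) (m : ℕ) :
    wordMap (blockPrefix b m) 0 ∈ Icc (0 : ℝ) 1 :=
  wordMap_mem_Icc (left_mem_Icc.2 zero_le_one)

theorem tendsto_wordMap_blockPrefix (b : ℕ → List (Fin 3)) :
    Tendsto (fun m => wordMap (blockPrefix b m) 0) atTop (𝓝 (codePoint b)) := by
  refine tendsto_atTop_ciSup (monotone_nat_of_le_succ fun m => ?_)
    ⟨1, forall_mem_range.2 fun m => (wordMap_blockPrefix_mem_Icc b m).2⟩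
  rw [blockPrefix_succ, wordMap_append]
  exact (strictMono_wordMap _).monotone (wordMap_mem_Icc (left_mem_Icc.2 zero_le_one)).1

theorem codePoint_mem_Icc (b : ℕ → List (Fin 3)) : codePoint b ∈ Icc (0 : ℝ) 1 :=
  isClosed_Icc.mem_of_tendsto (tendsto_wordMap_blockPrefix b)
    (Eventually.of_forall (wordMap_blockPrefix_mem_Icc b))

theorem codePoint_eq_wordMap_blockPrefix (b : ℕ → List (Fin 3)) (k : ℕ) :
    codePoint b = wordMap (blockPrefix b k) (codePoint fun i => b (k + i)) := by
  have hshift := (tendsto_wordMap_blockPrefix b).comp (tendsto_add_atTop_nat k)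
  refine tendsto_nhds_unique hshift <| (((continuous_wordMap _).tendsto _).comp
    (tendsto_wordMap_blockPrefix fun i => b (k + i))).congr fun m => ?_
  rw [Function.comp_apply, Function.comp_apply, ← wordMap_append, ← blockPrefix_add, add_comm]

theorem codePoint_eq_wordMap (b : ℕ → List (Fin 3)) :
    codePoint b = wordMap (b 0) (codePoint fun i => b (i + 1)) := by
  simpa [blockPrefix, add_comm] using codePoint_eq_wordMap_blockPrefix b 1

theorem isLowerLipschitz_blockPrefix {m : ℕ → ℝ} (hm : ∀ i, 0 ≤ m i)
    (hb : ∀ i, IsLowerLipschitz (m i) (b i)) (k : ℕ) :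
    IsLowerLipschitz (∏ i ∈ Finset.range k, m i) (blockPrefix b k) := by
  induction k with
  | zero => exact isLowerLipschitz_nil
  | succ k ih =>
    rw [Finset.prod_range_succ, blockPrefix_succ]
    exact isLowerLipschitz_append (Finset.prod_nonneg fun i _ => hm i) ih (hb k)

end CodePoint

section Alphabet

variable {G : Type*} {w : G → List (Fin 3)} {r : G → ℝ} {c : ℝ} {z : ℕ → List (Fin 3)} {q : ℕ → ℝ}

theorem measurable_of_dependsOn_range {X β : Type*} [Finite X] [MeasurableSpace X]
    [MeasurableSingletonClass X] [MeasurableSpace β] [Nonempty β] {f : (ℕ → X) → β} {m : ℕ}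
    (hf : DependsOn f (Finset.range m : Set ℕ)) : Measurable f := by
  obtain ⟨g, rfl⟩ := dependsOn_iff_exists_comp.1 hf
  have : Finite (Finset.range m : Set ℕ) := Finset.finite_toSet _
  exact (measurable_of_countable g).comp (measurable_restrict _)

theorem measurable_codePoint_append [Finite G] [MeasurableSpace G] [MeasurableSingletonClass G]
    (w : G → List (Fin 3)) (z : ℕ → List (Fin 3)) :
    Measurable fun ω : ℕ → G => codePoint fun k => w (ω k) ++ z k := by
  refine Measurable.iSup fun m => measurable_of_dependsOn_range (m := m) fun ω η h => ?_
  congr 1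
  exact blockPrefix_congr fun i hi => by rw [h i (by simpa using hi)]

theorem prod_mul_le_abs_codePoint_sub (hw : IsSeparatedAlphabet w r c) (hq : ∀ k, 0 < q k)
    (hz : ∀ k, IsLowerLipschitz (q k) (z k)) {ω η : ℕ → G} {k : ℕ} (heq : ∀ i < k, ω i = η i)
    (hne : ω k ≠ η k) :
    (∏ i ∈ Finset.range k, r (ω i) * q i) * c ≤
      |(codePoint fun i => w (ω i) ++ z i) - codePoint fun i => w (η i) ++ z i| := by
  have hpos (i : ℕ) : 0 ≤ r (ω i) * q i := (mul_pos (hw.ratio_pos _) (hq i)).le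
  have hlip := isLowerLipschitz_blockPrefix hpos (fun i =>
    isLowerLipschitz_append (hw.ratio_pos _).le (hw.isLowerLipschitz (ω i)) (hz i)) k
  have hprefix :
      blockPrefix (fun i => w (η i) ++ z i) k = blockPrefix (fun i => w (ω i) ++ z i) k :=
    blockPrefix_congr fun i hi => by rw [heq i hi]
  calc (∏ i ∈ Finset.range k, r (ω i) * q i) * c
      ≤ (∏ i ∈ Finset.range k, r (ω i) * q i) *
          |(codePoint fun i => w (ω (k + i)) ++ z (k + i)) -
            codePoint fun i => w (η (k + i)) ++ z (k + i)| := by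
        refine mul_le_mul_of_nonneg_left ?_ (Finset.prod_nonneg fun i _ => hpos i)
        rw [codePoint_eq_wordMap, codePoint_eq_wordMap fun i => w (η (k + i)) ++ z (k + i),
          wordMap_append, wordMap_append]
        exact hw.gap_le hne (wordMap_mem_Icc (codePoint_mem_Icc _))
          (wordMap_mem_Icc (codePoint_mem_Icc _))
    _ ≤ _ := mul_abs_sub_le_of_isLowerLipschitz hlip (codePoint_mem_Icc _) (codePoint_mem_Icc _)
    _ = _ := by
        rw [codePoint_eq_wordMap_blockPrefix (fun i => w (ω i) ++ z i) k,
          codePoint_eq_wordMap_blockPrefix (fun i => w (η i) ++ z i) k, hprefix]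

theorem exists_pmf_le {X : Type*} [Fintype X] {f : X → ℝ≥0∞} (hf : ∀ x, f x ≠ ⊤)
    (hsum : 1 ≤ ∑ x, f x) : ∃ p : PMF X, ∀ x, p x ≤ f x := by
  rw [← tsum_fintype (L := .unconditional X)] at hsum
  have h0 : ∑' x, f x ≠ 0 := (one_pos.trans_le hsum).ne'
  have htop : ∑' x, f x ≠ ⊤ := by
    rw [tsum_fintype]
    exact ENNReal.sum_ne_top.2 fun x _ => hf x
  refine ⟨PMF.normalize f h0 htop, fun x => ?_⟩
  rw [PMF.normalize_apply]
  exact mul_le_of_le_one_right' (ENNReal.inv_le_one.2 hsum)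

theorem exists_ratio_le [Finite G] (hw : IsSeparatedAlphabet w r c) :
    ∃ ρ, 0 < ρ ∧ ρ < 1 ∧ ∀ g, r g ≤ ρ := by
  rcases isEmpty_or_nonempty G with _ | _
  · exact ⟨1 / 2, by norm_num, by norm_num, fun g => isEmptyElim g⟩
  · obtain ⟨g, hg⟩ := Finite.exists_max r
    exact ⟨r g, hw.ratio_pos g, hw.ratio_lt_one g, hg⟩

/-- The factors `r (ω i)` decay geometrically, so raising the exponent from `s` to `s'` pays for the
subexponential factors `q i`. -/
theorem exists_prod_rpow_le [Finite G] (hw : IsSeparatedAlphabet w r c) (hq : ∀ k, 0 < q k)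
    (hq_le : ∀ k, q k ≤ 1)
    (hsub : ∀ β : ℝ, 1 < β → (fun k => ∏ i ∈ Finset.range k, (q i)⁻¹) =O[atTop] (β ^ · : ℕ → ℝ))
    {s s' : ℝ} (hs : s ≤ 1) (hss' : s < s') :
    ∃ C > 0, ∀ (ω : ℕ → G) (k : ℕ),
      ∏ i ∈ Finset.range k, r (ω i) ^ s' ≤ C * (∏ i ∈ Finset.range k, r (ω i) * q i) ^ s := by
  obtain ⟨ρ, hρ0, hρ1, hρ⟩ := exists_ratio_le hw
  set α := ρ ^ (s' - s)
  have hα0 : 0 < α := Real.rpow_pos_of_pos hρ0 _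
  obtain ⟨C, hC, hCq⟩ := Asymptotics.bound_of_isBigO_nat_atTop
    (hsub α⁻¹ (one_lt_inv₀ hα0 |>.2 (Real.rpow_lt_one hρ0.le hρ1 (sub_pos.2 hss'))))
  refine ⟨C, hC, fun ω k => ?_⟩
  have hr (i : ℕ) : 0 < r (ω i) := hw.ratio_pos (ω i)
  set R := ∏ i ∈ Finset.range k, r (ω i)
  set Q := ∏ i ∈ Finset.range k, q i
  have hR : 0 < R := Finset.prod_pos fun i _ => hr i
  have hQ : 0 < Q := Finset.prod_pos fun i _ => hq i
  have hQ1 : Q ≤ 1 := Finset.prod_le_one (fun i _ => (hq i).le) fun i _ => hq_le i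
  have hαQ : α ^ k ≤ C * Q := by
    have h := hCq (x := k) (by positivity)
    rwa [Finset.prod_inv_distrib, norm_inv, norm_pow, norm_inv, Real.norm_of_nonneg hQ.le,
      Real.norm_of_nonneg hα0.le, inv_pow, inv_le_iff_one_le_mul₀ hQ, mul_right_comm,
      ← div_eq_mul_inv, one_le_div (by positivity)] at h
  calc ∏ i ∈ Finset.range k, r (ω i) ^ s'
      = (∏ i ∈ Finset.range k, r (ω i) ^ s) * ∏ i ∈ Finset.range k, r (ω i) ^ (s' - s) := by
        rw [← Finset.prod_mul_distrib]
        exact Finset.prod_congr rfl fun i _ => by rw [← Real.rpow_add (hr i), add_sub_cancel]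
    _ ≤ R ^ s * α ^ k := by
        rw [Real.finsetProd_rpow _ _ fun i _ => (hr i).le]
        gcongr
        refine (Finset.prod_le_prod (fun i _ => by have := hr i; positivity) fun i _ =>
          Real.rpow_le_rpow (hr i).le (hρ _) (sub_pos.2 hss').le).trans_eq ?_
        rw [Finset.prod_const, Finset.card_range]
    _ ≤ R ^ s * (C * Q ^ s) := by
        gcongr
        exact hαQ.trans (by gcongr; exact Real.self_le_rpow_of_le_one hQ.le hQ1 hs)
    _ = C * (∏ i ∈ Finset.range k, r (ω i) * q i) ^ s := by
        rw [Finset.prod_mul_distrib, Real.mul_rpow hR.le hQ.le]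
        ring

theorem exists_prod_rpow_le_abs_codePoint_sub [Finite G] (hw : IsSeparatedAlphabet w r c)
    (hz : ∀ k, IsLowerLipschitz (q k) (z k)) (hq : ∀ k, 0 < q k) (hq_le : ∀ k, q k ≤ 1)
    (hsub : ∀ β : ℝ, 1 < β → (fun k => ∏ i ∈ Finset.range k, (q i)⁻¹) =O[atTop] (β ^ · : ℕ → ℝ))
    {s s' : ℝ} (hs0 : 0 ≤ s) (hs1 : s ≤ 1) (hss' : s < s') :
    ∃ K > 0, ∀ (ω η : ℕ → G) (k : ℕ), (∀ i < k, ω i = η i) → ω k ≠ η k →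
      ∏ i ∈ Finset.range k, r (ω i) ^ s' ≤
        K * |(codePoint fun i => w (ω i) ++ z i) - codePoint fun i => w (η i) ++ z i| ^ s := by
  obtain ⟨C, hC, hprod⟩ := exists_prod_rpow_le hw hq hq_le hsub hs1 hss'
  refine ⟨C * (c ^ s)⁻¹, mul_pos hC (inv_pos.2 (Real.rpow_pos_of_pos hw.gap_pos s)),
    fun ω η k heq hne => (hprod ω k).trans ?_⟩
  have hnonneg : 0 ≤ ∏ i ∈ Finset.range k, r (ω i) * q i :=
    Finset.prod_nonneg fun i _ => (mul_pos (hw.ratio_pos _) (hq i)).le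
  have hgap := prod_mul_le_abs_codePoint_sub hw hq hz heq hne
  rw [← le_div_iff₀ hw.gap_pos] at hgap
  rw [mul_assoc, mul_comm (c ^ s)⁻¹, ← div_eq_mul_inv, ← Real.div_rpow (abs_nonneg _)
    hw.gap_pos.le]
  gcongr

theorem ofReal_le_dimH_range_codePoint_append [Fintype G] (hw : IsSeparatedAlphabet w r c)
    (hz : ∀ k, IsLowerLipschitz (q k) (z k)) (hq : ∀ k, 0 < q k) (hq_le : ∀ k, q k ≤ 1)
    (hsub : ∀ β : ℝ, 1 < β → (fun k => ∏ i ∈ Finset.range k, (q i)⁻¹) =O[atTop] (β ^ · : ℕ → ℝ))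
    {s s' : ℝ} (hs0 : 0 ≤ s) (hs1 : s ≤ 1) (hss' : s < s') (hsum : 1 ≤ ∑ g, r g ^ s') :
    ENNReal.ofReal s ≤ dimH (range fun ω : ℕ → G => codePoint fun k => w (ω k) ++ z k) := by
  let _ : MeasurableSpace G := ⊤
  have : MeasurableSingletonClass G := ⟨fun _ => trivial⟩
  have hr_nonneg (g : G) : 0 ≤ r g ^ s' := Real.rpow_nonneg (hw.ratio_pos g).le _
  obtain ⟨ρ, hρ0, hρ1, hρ⟩ := exists_ratio_le hw
  have hθ : ENNReal.ofReal (ρ ^ s') < 1 :=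
    ENNReal.ofReal_lt_one.2 (Real.rpow_lt_one hρ0.le hρ1 (hs0.trans_lt hss'))
  have hrθ (g : G) : ENNReal.ofReal (r g ^ s') ≤ ENNReal.ofReal (ρ ^ s') :=
    ENNReal.ofReal_le_ofReal
      (Real.rpow_le_rpow (hw.ratio_pos g).le (hρ g) (hs0.trans hss'.le))
  obtain ⟨p, hp⟩ := exists_pmf_le (f := fun g => ENNReal.ofReal (r g ^ s'))
    (fun _ => ENNReal.ofReal_ne_top) (by
      rw [← ENNReal.ofReal_sum_of_nonneg fun g _ => hr_nonneg g]
      exact ENNReal.one_le_ofReal.2 hsum)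
  obtain ⟨K, hK, hprod⟩ := exists_prod_rpow_le_abs_codePoint_sub hw hz hq hq_le hsub hs0 hs1 hss'
  refine le_dimH_range_of_prod_le hθ (fun g => (hp g).trans (hrθ g))
    (measurable_codePoint_append w z) (ENNReal.ofReal_pos.2 hK).ne' ENNReal.ofReal_ne_top
    s.toNNReal fun ω η k heq hne => ?_
  calc ∏ i ∈ Finset.range k, p (ω i)
      ≤ ∏ i ∈ Finset.range k, ENNReal.ofReal (r (ω i) ^ s') :=
        Finset.prod_le_prod' fun i _ => hp _
    _ = ENNReal.ofReal (∏ i ∈ Finset.range k, r (ω i) ^ s') :=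
        (ENNReal.ofReal_prod_of_nonneg fun i _ => hr_nonneg _).symm
    _ ≤ _ := ENNReal.ofReal_le_ofReal (hprod ω η k heq hne)
    _ = _ := by
        rw [ENNReal.ofReal_mul hK.le, edist_dist, Real.dist_eq, Real.coe_toNNReal _ hs0,
          ENNReal.ofReal_rpow_of_nonneg (abs_nonneg _) hs0]

end Alphabet

/-! ### Sparse run lengths -/

/-- The length `k` of the run inserted at the times `k` that are perfect squares; no run is inserted
at other times. These runs are so long that they dominate all statistics, and so rare that they do
not affect the dimension. -/
def sparseRun (k : ℕ) : ℕ := if IsSquare k then k else 0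

theorem sparseRun_le (k : ℕ) : sparseRun k ≤ k := by
  rw [sparseRun]
  split_ifs
  exacts [le_rfl, k.zero_le]

theorem sum_range_sqrt_sq_le_sum_sparseRun (k : ℕ) :
    ∑ m ∈ Finset.range k.sqrt, m ^ 2 ≤ ∑ i ∈ Finset.range k, sparseRun i := by
  have hinj : Function.Injective fun m : ℕ => m ^ 2 := Nat.pow_left_injective two_ne_zero
  calc ∑ m ∈ Finset.range k.sqrt, m ^ 2
      = ∑ i ∈ (Finset.range k.sqrt).image (· ^ 2), sparseRun i := by
        rw [Finset.sum_image hinj.injOn]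
        exact Finset.sum_congr rfl fun m _ => by rw [sparseRun, if_pos (IsSquare.sq m)]
    _ ≤ ∑ i ∈ Finset.range k, sparseRun i := by
        refine Finset.sum_le_sum_of_subset (Finset.image_subset_iff.2 fun m hm => ?_)
        rw [Finset.mem_range] at hm ⊢
        nlinarith [Nat.sqrt_le' k]

theorem pow_three_le_sum_sq (s : ℕ) : s ^ 3 ≤ 3 * ∑ m ∈ Finset.range s, m ^ 2 + 3 * s ^ 2 := by
  induction s with
  | zero => simp
  | succ s ih =>
    rw [Finset.sum_range_succ]
    generalize ∑ m ∈ Finset.range s, m ^ 2 = S at *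
    nlinarith

theorem tendsto_sqrt_atTop : Tendsto Nat.sqrt atTop atTop :=
  tendsto_atTop_atTop.2 fun s => ⟨s * s, fun _ hk => Nat.le_sqrt.2 hk⟩

theorem sqrt_mul_le_sum_sparseRun (k : ℕ) :
    k.sqrt * k ≤ 3 * ∑ i ∈ Finset.range k, sparseRun i + 6 * k := by
  have hW := sum_range_sqrt_sq_le_sum_sparseRun k
  have hcube := pow_three_le_sum_sq k.sqrt
  have hk := Nat.sqrt_le' k
  have hk' : k ≤ k.sqrt ^ 2 + 2 * k.sqrt := by nlinarith [Nat.sqrt_le_add k]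
  nlinarith [Nat.sqrt_le_self k, Nat.mul_le_mul_left k.sqrt hk']

theorem natCast_isLittleO_sum_sparseRun :
    (fun k : ℕ => (k : ℝ)) =o[atTop] fun k => ∑ i ∈ Finset.range k, (sparseRun i : ℝ) := by
  refine Asymptotics.IsLittleO.of_bound fun C hC => ?_
  filter_upwards [tendsto_sqrt_atTop.eventually_ge_atTop (6 + ⌈3 / C⌉₊)] with k hk
  rw [← Nat.cast_sum, Real.norm_natCast, Real.norm_natCast]
  have hW : (k.sqrt * k : ℝ) ≤ 3 * (∑ i ∈ Finset.range k, sparseRun i : ℕ) + 6 * k :=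
    mod_cast sqrt_mul_le_sum_sparseRun k
  have hsqrt : 6 + 3 / C ≤ k.sqrt := by
    have : ((6 + ⌈3 / C⌉₊ : ℕ) : ℝ) ≤ k.sqrt := mod_cast hk
    push_cast at this
    linarith [Nat.le_ceil (3 / C)]
  have h3 : 3 / C * k ≤ 3 * (∑ i ∈ Finset.range k, sparseRun i : ℕ) := by
    nlinarith [k.cast_nonneg (α := ℝ)]
  rw [div_mul_eq_mul_div, div_le_iff₀ hC] at h3
  linarith

theorem tendsto_sum_sparseRun_atTop :
    Tendsto (fun k => ∑ i ∈ Finset.range k, (sparseRun i : ℝ)) atTop atTop := by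
  refine tendsto_atTop_mono' _ ?_ tendsto_natCast_atTop_atTop
  filter_upwards [natCast_isLittleO_sum_sparseRun.bound one_pos] with k hk
  rwa [one_mul, Real.norm_natCast, Real.norm_of_nonneg (by positivity)] at hk

theorem sum_sparseRun_sq_isLittleO :
    (fun k => ∑ i ∈ Finset.range k, (sparseRun i : ℝ) ^ 2) =o[atTop]
      fun k => (∑ i ∈ Finset.range k, (sparseRun i : ℝ)) ^ 2 := by
  refine Asymptotics.IsBigO.trans_isLittleO ?_ ((natCast_isLittleO_sum_sparseRun.mul_isBigO
    (Asymptotics.isBigO_refl _ _)).congr_right fun k => (sq _).symm)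
  refine Asymptotics.isBigO_of_le _ fun k => ?_
  rw [Real.norm_of_nonneg (by positivity), Real.norm_of_nonneg (by positivity), Finset.mul_sum]
  refine Finset.sum_le_sum fun i hi => ?_
  rw [sq]
  gcongr
  exact (sparseRun_le i).trans (Finset.mem_range.1 hi).le

theorem card_filter_isSquare_range_le (k : ℕ) :
    ((Finset.range k).filter fun i => IsSquare i).card ≤ k.sqrt + 1 := by
  refine (Finset.card_le_card (t := (Finset.range (k.sqrt + 1)).image fun m => m * m)
    fun i hi => ?_).trans (Finset.card_image_le.trans_eq (Finset.card_range _))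
  obtain ⟨hik, m, rfl⟩ := Finset.mem_filter.1 hi
  exact Finset.mem_image_of_mem _ (Finset.mem_range_succ_iff.2
    (Nat.le_sqrt.2 (Finset.mem_range.1 hik).le))

theorem prod_sparseRun_add_one_le {k : ℕ} (hk : k ≠ 0) :
    ∏ i ∈ Finset.range k, (sparseRun i + 1) ≤ k ^ (k.sqrt + 1) :=
  calc ∏ i ∈ Finset.range k, (sparseRun i + 1)
      ≤ ∏ i ∈ Finset.range k, if IsSquare i then k else 1 := by
        refine Finset.prod_le_prod' fun i hi => ?_
        rw [sparseRun]
        split_ifs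
        exacts [Finset.mem_range.1 hi, le_rfl]
    _ = k ^ ((Finset.range k).filter fun i => IsSquare i).card := by
        rw [Finset.prod_ite, Finset.prod_const, Finset.prod_const_one, mul_one]
    _ ≤ k ^ (k.sqrt + 1) :=
        Nat.pow_le_pow_right (Nat.pos_of_ne_zero hk) (card_filter_isSquare_range_le k)

theorem eventually_add_one_pow_le_pow (d : ℕ) {β : ℝ} (hβ : 1 < β) :
    ∀ᶠ s : ℕ in atTop, ((s : ℝ) + 1) ^ d ≤ β ^ s := by
  have h := (isLittleO_pow_const_const_pow_of_one_lt (R := ℝ) d hβ).bound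
    (inv_pos.2 (one_pos.trans hβ))
  filter_upwards [(tendsto_add_atTop_nat 1).eventually h] with s hs
  rwa [norm_pow, norm_pow, Real.norm_natCast, Real.norm_of_nonneg (one_pos.trans hβ).le,
    pow_succ', inv_mul_cancel_left₀ (one_pos.trans hβ).ne', Nat.cast_succ] at hs

theorem prod_sparseRun_add_one_pow_isBigO (d : ℕ) {β : ℝ} (hβ : 1 < β) :
    (fun k => ∏ i ∈ Finset.range k, ((sparseRun i : ℝ) + 1) ^ d) =O[atTop] (β ^ · : ℕ → ℝ) := by
  refine Asymptotics.IsBigO.of_bound 1 ?_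
  filter_upwards [eventually_ge_atTop 1, tendsto_sqrt_atTop.eventually
    (eventually_add_one_pow_le_pow (4 * d) hβ)] with k hk hpow
  have hprod : ∏ i ∈ Finset.range k, ((sparseRun i : ℝ) + 1) ≤ (k : ℝ) ^ (k.sqrt + 1) :=
    mod_cast prod_sparseRun_add_one_le (Nat.one_le_iff_ne_zero.1 hk)
  have hk_le : (k : ℝ) ≤ ((k.sqrt : ℝ) + 1) ^ 2 := mod_cast (Nat.lt_succ_sqrt' k).le
  have hsqrt : 1 ≤ k.sqrt := Nat.le_sqrt.2 hk
  rw [Real.norm_of_nonneg (by positivity), Real.norm_of_nonneg (by positivity), one_mul]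
  calc ∏ i ∈ Finset.range k, ((sparseRun i : ℝ) + 1) ^ d
      = (∏ i ∈ Finset.range k, ((sparseRun i : ℝ) + 1)) ^ d := Finset.prod_pow _ _ _
    _ ≤ ((((k.sqrt : ℝ) + 1) ^ 2) ^ (k.sqrt + 1)) ^ d := by
        gcongr
        exact hprod.trans (by gcongr)
    _ ≤ ((((k.sqrt : ℝ) + 1) ^ 2) ^ (2 * k.sqrt)) ^ d := by
        gcongr
        · nlinarith [k.sqrt.cast_nonneg (α := ℝ)]
        · lia
    _ = (((k.sqrt : ℝ) + 1) ^ (4 * d)) ^ k.sqrt := by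
        simp only [← pow_mul]
        congr 1
        ring
    _ ≤ (β ^ k.sqrt) ^ k.sqrt := by gcongr
    _ ≤ β ^ k := by
        rw [← pow_mul]
        exact pow_le_pow_right₀ hβ.le (Nat.sqrt_le k)

/-! ### Birkhoff sums along coded orbits -/

section Orbits

theorem iterate_theMap_wordMap {x : ℝ} (hx : x ∈ Ioo (0 : ℝ) 1) (w : List (Fin 3)) :
    theMap^[w.length] (wordMap w x) = x := by
  induction w with
  | nil => rfl
  | cons a w ih =>
    rw [List.length_cons, Function.iterate_succ_apply, wordMap_cons,
      theMap_invBranch (wordMap_mem_Ioo hx), ih]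

theorem wordMap_mem_Ioo_of_one_mem {w : List (Fin 3)} (hw : 1 ∈ w) {x : ℝ}
    (hx : x ∈ Icc (0 : ℝ) 1) : wordMap w x ∈ Ioo (0 : ℝ) 1 := by
  obtain ⟨u, v, rfl⟩ := List.append_of_mem hw
  rw [wordMap_append, wordMap_cons]
  exact wordMap_mem_Ioo (invBranch_one_mem_Ioo (wordMap_mem_Icc hx))

theorem codePoint_mem_Ioo {b : ℕ → List (Fin 3)} (hb : 1 ∈ b 0) : codePoint b ∈ Ioo (0 : ℝ) 1 := by
  rw [codePoint_eq_wordMap]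
  exact wordMap_mem_Ioo_of_one_mem hb (codePoint_mem_Icc _)

theorem iterate_theMap_codePoint {b : ℕ → List (Fin 3)} (hb : ∀ i, 1 ∈ b i) (k : ℕ) :
    theMap^[(blockPrefix b k).length] (codePoint b) = codePoint fun i => b (k + i) := by
  rw [codePoint_eq_wordMap_blockPrefix b k]
  exact iterate_theMap_wordMap (codePoint_mem_Ioo (b := fun i => b (k + i)) (hb _)) _

theorem abs_birkhoffSum_le {α : Type*} {f : α → α} {φ : α → ℝ} {M : ℝ} (hφ : ∀ x, |φ x| ≤ M)
    (n : ℕ) (x : α) : |birkhoffSum f φ n x| ≤ n * M := by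
  refine (Finset.abs_sum_le_sum_abs _ _).trans ((Finset.sum_le_sum fun k _ => hφ _).trans_eq ?_)
  rw [Finset.sum_const, Finset.card_range, nsmul_eq_mul]

theorem abs_birkhoffSum_sub_mul_le {α : Type*} {f : α → α} {φ : α → ℝ} {M A : ℝ}
    (hφ : ∀ x, |φ x| ≤ M) (hA : |A| ≤ M) {n m : ℕ} (hnm : n ≤ m) (x : α) :
    |birkhoffSum f φ m x - m * A| ≤ |birkhoffSum f φ n x - n * A| + 2 * M * (m - n) := by
  obtain ⟨r, rfl⟩ := Nat.exists_eq_add_of_le hnm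
  have htail := abs_birkhoffSum_le (f := f) hφ r (f^[n] x)
  have hrA : |r * A| ≤ r * M := by
    rw [abs_mul, Nat.abs_cast]
    gcongr
  rw [birkhoffSum_add]
  push_cast
  rw [abs_le] at *
  rcases abs_cases (birkhoffSum f φ n x - n * A) with h | h <;> constructor <;> linarith

theorem tendsto_birkhoffAverage_sub_of_isLittleO {α : Type*} {f : α → α} {φ : α → ℝ} {M : ℝ}
    (hφ : ∀ x, |φ x| ≤ M) {x : α} {N : ℕ → ℕ} (hN : StrictMono N) (h0 : N 0 = 0) {A : ℕ → ℝ}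
    (hA : ∀ k, |A k| ≤ M)
    (hsum : (fun k => birkhoffSum f φ (N k) x - N k * A k) =o[atTop] fun k => (N k : ℝ))
    (hgap : (fun k => (N (k + 1) : ℝ) - N k) =o[atTop] fun k => (N k : ℝ)) :
    Tendsto (fun m => birkhoffAverage ℝ f φ m x - A (blockIndex N m)) atTop (𝓝 0) := by
  set E : ℕ → ℝ := fun k => |birkhoffSum f φ (N k) x - N k * A k| + 2 * M * (N (k + 1) - N k)
  have hM : 0 ≤ M := (abs_nonneg _).trans (hA 0)
  have hE : E =o[atTop] fun k => (N k : ℝ) := hsum.abs_left.add (hgap.const_mul_left (2 * M))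
  have hbound (m : ℕ) : ‖birkhoffSum f φ m x - m * A (blockIndex N m)‖ ≤ E (blockIndex N m) := by
    refine (abs_birkhoffSum_sub_mul_le hφ (hA _) (apply_blockIndex_le h0 m) x).trans ?_
    have : (m : ℝ) ≤ N (blockIndex N m + 1) :=
      mod_cast (lt_apply_blockIndex_add_one hN m).le
    simp only [E]
    gcongr
  have hdiff : (fun m : ℕ => birkhoffSum f φ m x - m * A (blockIndex N m)) =o[atTop]
      fun m => (m : ℝ) := by
    refine ((Asymptotics.IsBigO.of_norm_le hbound).trans_isLittleO
      (hE.comp_tendsto (tendsto_blockIndex_atTop hN))).trans_le fun m => ?_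
    simpa only [Function.comp_apply, Real.norm_natCast] using
      Nat.cast_le.2 (apply_blockIndex_le h0 m)
  refine hdiff.tendsto_div_nhds_zero.congr' ?_
  filter_upwards [eventually_ne_atTop 0] with m hm
  rw [sub_div, mul_div_cancel_left₀ _ (Nat.cast_ne_zero.2 hm), birkhoffAverage, smul_eq_mul,
    div_eq_inv_mul]

theorem birkhoffSum_codePoint {b : ℕ → List (Fin 3)} (hb : ∀ i, 1 ∈ b i) (φ : ℝ → ℝ) (k : ℕ) :
    birkhoffSum theMap φ (blockPrefix b k).length (codePoint b) =
      ∑ i ∈ Finset.range k,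
        birkhoffSum theMap φ (b i).length (wordMap (b i) (codePoint fun j => b (i + 1 + j))) := by
  induction k with
  | zero => rfl
  | succ k ih =>
    rw [blockPrefix_succ, List.length_append, birkhoffSum_add, ih, iterate_theMap_codePoint hb,
      Finset.sum_range_succ, codePoint_eq_wordMap]
    simp only [add_zero, add_assoc, add_comm 1]

theorem eventually_abs_wordMap_replicate_sub_lt {φ : ℝ → ℝ} (hφ : Continuous φ) {ε : ℝ}
    (hε : 0 < ε) : ∀ᶠ n in atTop, ∀ a, ∀ t ∈ Icc (0 : ℝ) 1,
      |φ (wordMap (List.replicate n a) t) - φ (theFixedPts a)| < ε := by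
  refine eventually_all.2 fun a => ?_
  obtain ⟨δ, hδ, hφδ⟩ := Metric.continuousAt_iff.1 (hφ.continuousAt (x := theFixedPts a)) ε hε
  filter_upwards [tendsto_natCast_add_one_rpow_neg_half.eventually_lt_const hδ] with n hn t ht
  refine hφδ (lt_of_le_of_lt ?_ hn)
  have hdist := abs_wordMap_sub_le_cylLength (w := List.replicate n a) ht (theFixedPts_mem_Icc a)
  rw [wordMap_replicate_theFixedPts] at hdist
  exact hdist.trans (cylLength_le_rpow (List.length_replicate).ge)

theorem birkhoffSum_wordMap_replicate (φ : ℝ → ℝ) {t : ℝ} (ht : t ∈ Ioo (0 : ℝ) 1) (n : ℕ)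
    (a : Fin 3) : birkhoffSum theMap φ n (wordMap (List.replicate n a) t) =
      ∑ j ∈ Finset.range n, φ (wordMap (List.replicate (j + 1) a) t) := by
  induction n with
  | zero => rfl
  | succ n ih =>
    rw [birkhoffSum_succ', Finset.sum_range_succ, ← ih, add_comm, List.replicate_succ,
      wordMap_cons, theMap_invBranch (wordMap_mem_Ioo ht)]

theorem sum_range_le_mul_add_mul {f : ℕ → ℝ} {ε B : ℝ} {J : ℕ} (hε : 0 ≤ ε) (hB : 0 ≤ B)
    (hf : ∀ j, f j ≤ B) (hJ : ∀ j ≥ J, f j ≤ ε) (n : ℕ) :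
    ∑ j ∈ Finset.range n, f j ≤ ε * n + B * J := by
  have hsum (m : ℕ) : ∑ j ∈ Finset.range m, f j ≤ B * m := by
    simpa [mul_comm] using Finset.sum_le_card_nsmul (Finset.range m) f B fun j _ => hf j
  rcases le_total n J with hn | hn
  · calc ∑ j ∈ Finset.range n, f j ≤ B * n := hsum n
      _ ≤ B * J := by gcongr
      _ ≤ ε * n + B * J := le_add_of_nonneg_left (by positivity)
  · rw [← Finset.sum_range_add_sum_Ico _ hn, add_comm]
    refine add_le_add ?_ (hsum J)
    calc ∑ j ∈ Finset.Ico J n, f j ≤ (n - J : ℕ) • ε :=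
          (Finset.sum_le_card_nsmul _ _ _ fun j hj => hJ j (Finset.mem_Ico.1 hj).1).trans_eq
            (by rw [Nat.card_Ico])
      _ ≤ ε * n := by
          rw [nsmul_eq_mul, mul_comm]
          gcongr
          exact n.sub_le J

theorem exists_abs_birkhoffSum_replicate_sub_le (φ : BoundedContinuousFunction ℝ ℝ) {ε : ℝ}
    (hε : 0 < ε) : ∃ D, ∀ (n : ℕ) (a : Fin 3), ∀ t ∈ Ioo (0 : ℝ) 1,
      |birkhoffSum theMap φ n (wordMap (List.replicate n a) t) - n * φ (theFixedPts a)| ≤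
        ε * n + D := by
  obtain ⟨J, hJ⟩ := eventually_atTop.1 (eventually_abs_wordMap_replicate_sub_lt φ.continuous hε)
  refine ⟨2 * ‖φ‖ * J, fun n a t ht => ?_⟩
  have hconst : n * φ (theFixedPts a) = ∑ _j ∈ Finset.range n, φ (theFixedPts a) := by
    rw [Finset.sum_const, Finset.card_range, nsmul_eq_mul]
  rw [birkhoffSum_wordMap_replicate _ ht, hconst, ← Finset.sum_sub_distrib]
  refine (Finset.abs_sum_le_sum_abs _ _).trans
    (sum_range_le_mul_add_mul hε.le (by positivity) (fun j => ?_) (fun j hj => ?_) n)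
  · exact φ.dist_le_two_norm _ _
  · exact (hJ (j + 1) (by lia) a t (Ioo_subset_Icc_self ht)).le

end Orbits

/-- The sequence of words `u i`, each followed by a run of length `n i` of the letter `a i`. -/
def runBlock (u : ℕ → List (Fin 3)) (n : ℕ → ℕ) (a : ℕ → Fin 3) (i : ℕ) : List (Fin 3) :=
  u i ++ List.replicate (n i) (a i)

section RunBlock

variable {u : ℕ → List (Fin 3)} {n : ℕ → ℕ} {a : ℕ → Fin 3} {L : ℕ}

theorem one_mem_runBlock (hu : ∀ i, 1 ∈ u i) (i : ℕ) : 1 ∈ runBlock u n a i :=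
  List.mem_append_left _ (hu i)

theorem length_runBlock (i : ℕ) : (runBlock u n a i).length = (u i).length + n i := by
  rw [runBlock, List.length_append, List.length_replicate]

theorem length_blockPrefix_runBlock (k : ℕ) : (blockPrefix (runBlock u n a) k).length =
    ∑ i ∈ Finset.range k, (u i).length + ∑ i ∈ Finset.range k, n i := by
  induction k with
  | zero => rfl
  | succ k ih =>
    rw [blockPrefix_succ, List.length_append, ih, length_runBlock, Finset.sum_range_succ,
      Finset.sum_range_succ, add_add_add_comm]

theorem strictMono_length_blockPrefix {b : ℕ → List (Fin 3)} (hb : ∀ i, 1 ∈ b i) :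
    StrictMono fun k => (blockPrefix b k).length := by
  refine strictMono_nat_of_lt_succ fun k => ?_
  rw [blockPrefix_succ, List.length_append]
  exact Nat.lt_add_of_pos_right (List.length_pos_of_mem (hb k))

theorem abs_birkhoffSum_runBlock_sub_le (φ : BoundedContinuousFunction ℝ ℝ) {ε D : ℝ}
    (hD : ∀ (n : ℕ) (a : Fin 3), ∀ t ∈ Ioo (0 : ℝ) 1,
      |birkhoffSum theMap φ n (wordMap (List.replicate n a) t) - n * φ (theFixedPts a)| ≤
        ε * n + D) (hL : ∀ i, (u i).length ≤ L) {t : ℝ} (ht : t ∈ Ioo (0 : ℝ) 1) (i : ℕ) :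
    |birkhoffSum theMap φ (runBlock u n a i).length (wordMap (runBlock u n a i) t) -
      n i * φ (theFixedPts (a i))| ≤ ε * n i + (L * ‖φ‖ + D) := by
  rw [length_runBlock, runBlock, birkhoffSum_add, wordMap_append,
    iterate_theMap_wordMap (wordMap_mem_Ioo ht), add_sub_assoc]
  have hu : |birkhoffSum theMap φ (u i).length (wordMap (u i)
      (wordMap (List.replicate (n i) (a i)) t))| ≤ L * ‖φ‖ :=
    (abs_birkhoffSum_le φ.norm_coe_le_norm _ _).trans (by gcongr; exact hL i)
  linarith [abs_add_le (birkhoffSum theMap φ (u i).length (wordMap (u i)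
    (wordMap (List.replicate (n i) (a i)) t))) (birkhoffSum theMap φ (n i)
    (wordMap (List.replicate (n i) (a i)) t) - n i * φ (theFixedPts (a i))), hD (n i) (a i) t ht]

theorem birkhoffSum_runBlock_sub_isLittleO (φ : BoundedContinuousFunction ℝ ℝ)
    (hu : ∀ i, 1 ∈ u i) (hL : ∀ i, (u i).length ≤ L)
    (hn : (fun k : ℕ => (k : ℝ)) =o[atTop] fun k => ∑ i ∈ Finset.range k, (n i : ℝ)) :
    (fun k => birkhoffSum theMap φ (blockPrefix (runBlock u n a) k).length
        (codePoint (runBlock u n a)) - ∑ i ∈ Finset.range k, n i * φ (theFixedPts (a i)))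
      =o[atTop] fun k => ∑ i ∈ Finset.range k, (n i : ℝ) := by
  refine Asymptotics.IsLittleO.of_bound fun ε hε => ?_
  obtain ⟨D, hD⟩ := exists_abs_birkhoffSum_replicate_sub_le φ (half_pos hε)
  filter_upwards [(hn.const_mul_left (L * ‖φ‖ + D)).bound (half_pos hε)] with k hk
  have hterm (i : ℕ) := abs_birkhoffSum_runBlock_sub_le (n := n) (a := a) φ hD hL
    (codePoint_mem_Ioo (b := fun j => runBlock u n a (i + 1 + j)) (one_mem_runBlock hu _)) i
  rw [birkhoffSum_codePoint (one_mem_runBlock hu), ← Finset.sum_sub_distrib, Real.norm_eq_abs]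
  refine (Finset.abs_sum_le_sum_abs _ _).trans
    ((Finset.sum_le_sum fun i _ => hterm i).trans ?_)
  rw [Finset.sum_add_distrib, ← Finset.mul_sum, Finset.sum_const, Finset.card_range,
    nsmul_eq_mul, mul_comm (k : ℝ)]
  rw [Real.norm_of_nonneg (Finset.sum_nonneg fun i _ => (n i).cast_nonneg)] at hk ⊢
  linarith [le_of_abs_le hk]

theorem sum_mul_sub_mul_dotProduct_isLittleO {ι : Type*} [Fintype ι] [DecidableEq ι] {w : ℕ → ℝ}
    {a : ℕ → ι} {c : ℕ → ι → ℝ}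
    (h : (fun k => ∑ i ∈ Finset.range k, w i • Pi.single (a i) (1 : ℝ) -
      (∑ i ∈ Finset.range k, w i) • c k) =o[atTop] fun k => ∑ i ∈ Finset.range k, w i)
    (v : ι → ℝ) :
    (fun k => ∑ i ∈ Finset.range k, w i * v (a i) - (∑ i ∈ Finset.range k, w i) * (c k ⬝ᵥ v))
      =o[atTop] fun k => ∑ i ∈ Finset.range k, w i := by
  have hlin := (Fintype.linearCombination ℝ v).toContinuousLinearMap.isBigO_comp
    (fun k => ∑ i ∈ Finset.range k, w i • Pi.single (a i) (1 : ℝ) -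
      (∑ i ∈ Finset.range k, w i) • c k) atTop
  refine (hlin.trans_isLittleO h).congr_left fun k => ?_
  simp only [LinearMap.coe_toContinuousLinearMap', map_sub, map_sum, map_smul,
    Fintype.linearCombination_apply_single, smul_eq_mul, one_mul]
  rfl

theorem abs_dotProduct_le_of_mem_stdSimplex {ι : Type*} [Fintype ι] {c v : ι → ℝ} {M : ℝ}
    (hc : c ∈ stdSimplex ℝ ι) (hv : ∀ j, |v j| ≤ M) : |c ⬝ᵥ v| ≤ M :=
  calc |c ⬝ᵥ v| ≤ ∑ j, |c j * v j| := Finset.abs_sum_le_sum_abs _ _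
    _ ≤ ∑ j, c j * M := Finset.sum_le_sum fun j _ => by
        rw [abs_mul, abs_of_nonneg (hc.1 j)]
        exact mul_le_mul_of_nonneg_left (hv j) (hc.1 j)
    _ = M := by rw [← Finset.sum_mul, hc.2, one_mul]

theorem birkhoffSum_blockPrefix_sub_isLittleO (φ : BoundedContinuousFunction ℝ ℝ)
    (hu : ∀ i, 1 ∈ u i) (hL : ∀ i, (u i).length ≤ L)
    (hn : (fun k : ℕ => (k : ℝ)) =o[atTop] fun k => ∑ i ∈ Finset.range k, (n i : ℝ))
    {c : ℕ → Fin 3 → ℝ} (hc : ∀ k, c k ∈ stdSimplex ℝ (Fin 3))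
    (hac : (fun k => ∑ i ∈ Finset.range k, (n i : ℝ) • Pi.single (a i) (1 : ℝ) -
      (∑ i ∈ Finset.range k, (n i : ℝ)) • c k) =o[atTop] fun k => ∑ i ∈ Finset.range k, (n i : ℝ)) :
    (fun k => birkhoffSum theMap φ (blockPrefix (runBlock u n a) k).length
        (codePoint (runBlock u n a)) -
        (blockPrefix (runBlock u n a) k).length * (c k ⬝ᵥ (φ ∘ theFixedPts)))
      =o[atTop] fun k => ∑ i ∈ Finset.range k, (n i : ℝ) := by
  have hrest : (fun k => ((∑ i ∈ Finset.range k, (u i).length : ℕ) : ℝ) *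
      (c k ⬝ᵥ (φ ∘ theFixedPts))) =o[atTop] fun k => ∑ i ∈ Finset.range k, (n i : ℝ) := by
    refine Asymptotics.IsBigO.trans_isLittleO (.of_bound (L * ‖φ‖) (.of_forall fun k => ?_)) hn
    have hlen : ∑ i ∈ Finset.range k, (u i).length ≤ k * L := by
      simpa using Finset.sum_le_card_nsmul (Finset.range k) _ L fun i _ => hL i
    have hdot := abs_dotProduct_le_of_mem_stdSimplex (hc k) fun j =>
      φ.norm_coe_le_norm (theFixedPts j)
    rw [norm_mul, Real.norm_natCast, Real.norm_natCast, Real.norm_eq_abs]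
    calc _ ≤ ((k * L : ℕ) : ℝ) * ‖φ‖ :=
          mul_le_mul (mod_cast hlen) hdot (abs_nonneg _) (Nat.cast_nonneg _)
      _ = L * ‖φ‖ * k := by push_cast; ring
  refine (((birkhoffSum_runBlock_sub_isLittleO (a := a) φ hu hL hn).add
    (sum_mul_sub_mul_dotProduct_isLittleO hac (φ ∘ theFixedPts))).sub hrest).congr_left fun k => ?_
  rw [length_blockPrefix_runBlock]
  push_cast
  simp only [Function.comp_apply]
  ring

theorem length_runBlock_isLittleO (hL : ∀ i, (u i).length ≤ L)
    (hn : (fun k : ℕ => (k : ℝ)) =o[atTop] fun k => ∑ i ∈ Finset.range k, (n i : ℝ))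
    (hn_le : ∀ k, n k ≤ k) :
    (fun k => ((runBlock u n a k).length : ℝ)) =o[atTop]
      fun k => ∑ i ∈ Finset.range k, (n i : ℝ) := by
  refine Asymptotics.IsBigO.trans_isLittleO (.of_bound (L + 1) ?_) hn
  filter_upwards [eventually_ge_atTop 1] with k hk
  rw [Real.norm_natCast, Real.norm_natCast, length_runBlock]
  have : (u k).length + n k ≤ (L + 1) * k := by nlinarith [hL k, hn_le k]
  exact_mod_cast this

theorem exists_tendsto_birkhoffAverage_sub (hu : ∀ i, 1 ∈ u i) (hL : ∀ i, (u i).length ≤ L)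
    (hn : (fun k : ℕ => (k : ℝ)) =o[atTop] fun k => ∑ i ∈ Finset.range k, (n i : ℝ))
    (hn_le : ∀ k, n k ≤ k) {c : ℕ → Fin 3 → ℝ} (hc : ∀ k, c k ∈ stdSimplex ℝ (Fin 3))
    (hac : (fun k => ∑ i ∈ Finset.range k, (n i : ℝ) • Pi.single (a i) (1 : ℝ) -
      (∑ i ∈ Finset.range k, (n i : ℝ)) • c k) =o[atTop] fun k => ∑ i ∈ Finset.range k, (n i : ℝ)) :
    ∃ κ τ : ℕ → ℕ, StrictMono τ ∧ (∀ m, κ (τ m) = m) ∧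
      ∀ φ : BoundedContinuousFunction ℝ ℝ,
        Tendsto (fun m => birkhoffAverage ℝ theMap φ m (codePoint (runBlock u n a)) -
          c (κ m) ⬝ᵥ (φ ∘ theFixedPts)) atTop (𝓝 0) := by
  let N : ℕ → ℕ := fun k => (blockPrefix (runBlock u n a) k).length
  have hN : StrictMono N := strictMono_length_blockPrefix (one_mem_runBlock hu)
  have h0 : N 0 = 0 := List.length_nil
  have hWN : (fun k => ∑ i ∈ Finset.range k, (n i : ℝ)) =O[atTop] fun k => (N k : ℝ) := by
    refine Asymptotics.IsBigO.of_norm_le fun k => ?_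
    rw [← Nat.cast_sum, Real.norm_natCast, Nat.cast_le]
    exact (Nat.le_add_left _ _).trans_eq (length_blockPrefix_runBlock k).symm
  have hgap : (fun k => (N (k + 1) : ℝ) - N k) =o[atTop] fun k => (N k : ℝ) := by
    refine ((length_runBlock_isLittleO (a := a) hL hn hn_le).trans_isBigO hWN).congr_left
      fun k => ?_
    simp only [N, blockPrefix_succ, List.length_append]
    push_cast
    ring
  refine ⟨blockIndex N, N, hN, blockIndex_apply hN h0, fun φ => ?_⟩
  have hA (k : ℕ) : |c k ⬝ᵥ (φ ∘ theFixedPts)| ≤ ‖φ‖ :=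
    abs_dotProduct_le_of_mem_stdSimplex (hc k) fun j => φ.norm_coe_le_norm (theFixedPts j)
  have hsum := (birkhoffSum_blockPrefix_sub_isLittleO φ hu hL hn hc hac).trans_isBigO hWN
  exact tendsto_birkhoffAverage_sub_of_isLittleO φ.norm_coe_le_norm hN h0 hA hsum hgap

end RunBlock

/-! ### Limit measures -/

theorem integral_empMeasure (f : ℝ → ℝ) (n : ℕ) (x : ℝ) (g : BoundedContinuousFunction ℝ ℝ) :
    ∫ y, g y ∂empMeasure f n x = birkhoffAverage ℝ f g n x := by
  rw [empMeasure, integral_smul_measure,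
    integral_finsetSum_measure fun _ _ => integrable_dirac enorm_lt_top]
  simp only [integral_dirac, ENNReal.toReal_inv, ENNReal.toReal_natCast, birkhoffAverage,
    birkhoffSum]

theorem integral_nuMeasure {p : Fin 3 → ℝ} (hp : ∀ j, 0 ≤ p j)
    (g : BoundedContinuousFunction ℝ ℝ) :
    ∫ y, g y ∂nuMeasure p = p ⬝ᵥ (g ∘ theFixedPts) := by
  rw [nuMeasure, integral_finsetSum_measure fun _ _ =>
    (integrable_dirac enorm_lt_top).smul_measure ENNReal.ofReal_ne_top]
  simp only [integral_smul_measure, integral_dirac, ENNReal.toReal_ofReal (hp _), smul_eq_mul]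
  rfl

theorem isFiniteMeasure_nuMeasure (p : Fin 3 → ℝ) : IsFiniteMeasure (nuMeasure p) := by
  refine ⟨?_⟩
  simp [nuMeasure, Measure.finsetSum_apply, ENNReal.sum_lt_top]

theorem isFiniteMeasure_of_integral_one_ne_zero {α : Type*} [MeasurableSpace α] {ν : Measure α}
    (h : ∫ _, (1 : ℝ) ∂ν ≠ 0) : IsFiniteMeasure ν := by
  rw [integral_const, smul_eq_mul, mul_one] at h
  exact ⟨lt_top_iff_ne_top.2 fun htop => h (by rw [Measure.real, htop, ENNReal.toReal_top])⟩

theorem eq_nuMeasure_of_forall_integral_eq {ν : Measure ℝ} {p : Fin 3 → ℝ}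
    (hp : p ∈ stdSimplex ℝ (Fin 3))
    (h : ∀ g : BoundedContinuousFunction ℝ ℝ, ∫ y, g y ∂ν = p ⬝ᵥ (g ∘ theFixedPts)) :
    ν = nuMeasure p := by
  have hone : ∫ _, (1 : ℝ) ∂ν = 1 := by
    have := h (.const ℝ 1)
    simpa only [BoundedContinuousFunction.const_apply, dotProduct, Function.comp_apply, mul_one,
      hp.2] using this
  have := isFiniteMeasure_of_integral_one_ne_zero (hone.trans_ne one_ne_zero)
  have := isFiniteMeasure_nuMeasure p
  exact ext_of_forall_integral_eq_of_IsFiniteMeasure fun g =>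
    (h g).trans (integral_nuMeasure hp.1 g).symm

theorem Vset_eq_of_tendsto_birkhoffAverage_sub {f : ℝ → ℝ} {x : ℝ} {C : Set (Fin 3 → ℝ)}
    (hC : IsCompact C) (hCS : C ⊆ stdSimplex ℝ (Fin 3)) {c : ℕ → Fin 3 → ℝ} (hc : ∀ m, c m ∈ C)
    (hcluster : ∀ p ∈ C, MapClusterPt p atTop c)
    (hlim : ∀ g : BoundedContinuousFunction ℝ ℝ,
      Tendsto (fun m => birkhoffAverage ℝ f g m x - c m ⬝ᵥ (g ∘ theFixedPts)) atTop (𝓝 0)) :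
    Vset f x = {ν | ∃ p ∈ C, ν = nuMeasure p} := by
  have hconv {u : ℕ → ℕ} (hu : StrictMono u) {p : Fin 3 → ℝ}
      (hp : Tendsto (fun k => c (u k + 1)) atTop (𝓝 p)) (g : BoundedContinuousFunction ℝ ℝ) :
      Tendsto (fun k => ∫ y, g y ∂empMeasure f (u k + 1) x) atTop
        (𝓝 (p ⬝ᵥ (g ∘ theFixedPts))) := by
    have hdot : Continuous fun q : Fin 3 → ℝ => q ⬝ᵥ (g ∘ theFixedPts) :=
      continuous_id.dotProduct continuous_const
    have hsub := (hlim g).comp ((tendsto_add_atTop_nat 1).comp hu.tendsto_atTop)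
    simpa [integral_empMeasure, Function.comp_def] using hsub.add ((hdot.tendsto p).comp hp)
  ext ν
  constructor
  · rintro ⟨u, hu, hν⟩
    obtain ⟨p, hp, v, hv, hlimp⟩ := hC.tendsto_subseq fun k => hc (u k + 1)
    refine ⟨p, hp, eq_nuMeasure_of_forall_integral_eq (hCS hp) fun g => ?_⟩
    exact tendsto_nhds_unique ((hν g).comp hv.tendsto_atTop) (hconv (hu.comp hv) hlimp g)
  · rintro ⟨p, hp, rfl⟩
    have hshift : MapClusterPt p atTop fun m => c (m + 1) := by
      rw [MapClusterPt, ← Function.comp_def c, ← Filter.map_map, map_add_atTop_eq_nat]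
      exact hcluster p hp
    obtain ⟨u, hu, hlimp⟩ := hshift.tendsto_subseq
    refine ⟨u, hu, fun g => ?_⟩
    rw [integral_nuMeasure (hCS hp).1]
    exact hconv hu hlimp g

theorem Vset_codePoint_runBlock {u : ℕ → List (Fin 3)} {n : ℕ → ℕ} {a : ℕ → Fin 3} {L : ℕ}
    (hu : ∀ i, 1 ∈ u i) (hL : ∀ i, (u i).length ≤ L)
    (hn : (fun k : ℕ => (k : ℝ)) =o[atTop] fun k => ∑ i ∈ Finset.range k, (n i : ℝ))
    (hn_le : ∀ k, n k ≤ k) {C : Set (Fin 3 → ℝ)} (hC : IsCompact C)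
    (hCS : C ⊆ stdSimplex ℝ (Fin 3)) {c : ℕ → Fin 3 → ℝ} (hc : ∀ k, c k ∈ C)
    (hcluster : ∀ p ∈ C, MapClusterPt p atTop c)
    (hac : (fun k => ∑ i ∈ Finset.range k, (n i : ℝ) • Pi.single (a i) (1 : ℝ) -
      (∑ i ∈ Finset.range k, (n i : ℝ)) • c k) =o[atTop] fun k => ∑ i ∈ Finset.range k, (n i : ℝ)) :
    Vset theMap (codePoint (runBlock u n a)) = {ν | ∃ p ∈ C, ν = nuMeasure p} := by
  obtain ⟨κ, τ, hτ, hκτ, hlim⟩ :=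
    exists_tendsto_birkhoffAverage_sub hu hL hn hn_le (fun k => hCS (hc k)) hac
  refine Vset_eq_of_tendsto_birkhoffAverage_sub hC hCS (fun m => hc (κ m)) (fun p hp => ?_) hlim
  have hcomp : c = (fun m => c (κ m)) ∘ τ := funext fun m => congrArg c (hκτ m).symm
  exact (hcomp ▸ hcluster p hp).of_comp hτ.tendsto_atTop

theorem simplexS_subset_stdSimplex : simplexS ⊆ stdSimplex ℝ (Fin 3) :=
  fun _ hp => ⟨fun i => (hp.1 i).1, hp.2⟩

theorem ofReal_le_dimH_setOf_Vset_eq {C : Set (Fin 3 → ℝ)} (hCS : C ⊆ stdSimplex ℝ (Fin 3))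
    (hCcl : IsClosed C) (hCconn : IsConnected C) {s : ℝ} (hs0 : 0 ≤ s) (hs1 : s < 1) :
    ENNReal.ofReal s ≤
      dimH {x ∈ Icc (0 : ℝ) 1 | Vset theMap x = {ν | ∃ p ∈ C, ν = nuMeasure p}} := by
  obtain ⟨a, c, hc, hcluster, hac⟩ := exists_sum_smul_single_sub_smul_isLittleO hCS
    hCconn.isPreconnected hCconn.nonempty (fun i => (sparseRun i).cast_nonneg)
    tendsto_sum_sparseRun_atTop sum_sparseRun_sq_isLittleO
  obtain ⟨s', hss', hs'1⟩ := exists_between hs1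
  obtain ⟨N, T, r, δ, hw, hsum⟩ := exists_isSeparatedAlphabet hs'1
  set w : StoppingIndex N T → List (Fin 3) := fun g => stoppingWord g ++ [1]
  refine (ofReal_le_dimH_range_codePoint_append hw
    (fun k => isLowerLipschitz_replicate (sparseRun k) (a k)) (fun k => by positivity)
    (fun k => inv_le_one_of_one_le₀ (one_le_pow₀ (by simp))) (fun β hβ => ?_)
    hs0 hs1.le hss' hsum).trans (dimH_mono ?_)
  · simpa only [inv_inv] using prod_sparseRun_add_one_pow_isBigO 216 hβ
  · rintro _ ⟨ω, rfl⟩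
    refine ⟨codePoint_mem_Icc _, ?_⟩
    exact Vset_codePoint_runBlock (u := fun k => w (ω k)) (fun k => by simp [w])
      (fun k => Finset.le_sup (f := fun g => (w g).length) (Finset.mem_univ (ω k)))
      natCast_isLittleO_sum_sparseRun sparseRun_le
      ((isCompact_stdSimplex ℝ (Fin 3)).of_isClosed_subset hCcl hCS) hCS hc hcluster hac

/-- For every nonempty closed connected `C ⊆ S`, the set
`{x ∈ [0,1] : V(x) = πC}` has Hausdorff dimension `1`. -/
theorem stmt1 (C : Set (Fin 3 → ℝ)) (hCS : C ⊆ simplexS)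
    (hCne : C.Nonempty) (hCcl : IsClosed C) (hCconn : IsConnected C) :
    dimH {x : ℝ | x ∈ Set.Icc (0:ℝ) 1 ∧
      Vset theMap x = {ν | ∃ p ∈ C, ν = nuMeasure p}} = 1 := by
  refine le_antisymm ((dimH_mono (subset_univ _)).trans_eq Real.dimH_univ) ?_
  refine le_of_forall_lt_imp_le_of_dense fun s hs => ?_
  lift s to NNReal using hs.ne_top
  rw [← ENNReal.ofReal_coe_nnreal]
  exact ofReal_le_dimH_setOf_Vset_eq (hCS.trans simplexS_subset_stdSimplex) hCcl hCconn s.2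
    (mod_cast hs)
end
end

section
/- Let λ > 1 be real, n ≥ 1 an integer, and C ∈ (0,1]. Let ℓ₁,…,ℓ_m be finitely many real numbers with 0 < ℓ_j ≤ λ^{−n} for each j and C ≤ ℓ₁ + ⋯ + ℓ_m ≤ 1. If s ∈ [0,1] satisfies ℓ₁^{1−s} + ⋯ + ℓ_m^{1−s} = 1, then s ≤ (1 − C)/(C·n·log λ). -/
open Set

/-! Lowering the exponent of `x` from `1` to `1 - s` multiplies it by `x ^ (-s) = exp (-s log x)`,
which is at least `1 - s log x`. If `x ≤ λ ^ (-n)`, this factor is at least `1 + s n log λ`,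
uniformly in `x`; summed over lengths of total at least `C`, it forces
`C (1 + s n log λ) ≤ ∑ ℓ_j ^ (1 - s) = 1`, which is the claimed bound on `s`. -/

theorem mul_one_sub_mul_log_le_rpow_one_sub {x : ℝ} (hx : 0 < x) (s : ℝ) :
    x * (1 - s * Real.log x) ≤ x ^ (1 - s) :=
  calc
    x * (1 - s * Real.log x) ≤ x * Real.exp (-(s * Real.log x)) := by
      gcongr
      exact Real.one_sub_le_exp_neg _
    _ = x * x ^ (-s) := by rw [Real.rpow_def_of_pos hx]; ring_nf
    _ = x ^ (1 - s) := by rw [sub_eq_add_neg, Real.rpow_add hx, Real.rpow_one]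

theorem mul_one_add_mul_le_rpow_one_sub {x a s : ℝ} (hx : 0 < x) (hxa : x ≤ Real.exp (-a))
    (hs : 0 ≤ s) : x * (1 + s * a) ≤ x ^ (1 - s) := by
  have hlog : Real.log x ≤ -a := (Real.log_le_iff_le_exp hx).2 hxa
  calc
    x * (1 + s * a) = x * (1 - s * -a) := by ring
    _ ≤ x * (1 - s * Real.log x) := by gcongr
    _ ≤ x ^ (1 - s) := mul_one_sub_mul_log_le_rpow_one_sub hx s

theorem tsum_mul_one_add_mul_le_tsum_rpow_one_sub {ι : Type*} {ℓ : ι → ℝ} {a s : ℝ}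
    (hpos : ∀ j, 0 < ℓ j) (hle : ∀ j, ℓ j ≤ Real.exp (-a)) (ha : 0 ≤ a) (hs : 0 ≤ s)
    (hsummable : Summable fun j ↦ ℓ j ^ (1 - s)) :
    (∑' j, ℓ j) * (1 + s * a) ≤ ∑' j, ℓ j ^ (1 - s) := by
  have hterm (j : ι) : ℓ j * (1 + s * a) ≤ ℓ j ^ (1 - s) :=
    mul_one_add_mul_le_rpow_one_sub (hpos j) (hle j) hs
  have hfactor : 0 < 1 + s * a := by positivity
  have hsummable_mul : Summable fun j ↦ ℓ j * (1 + s * a) :=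
    hsummable.of_nonneg_of_le (fun j ↦ (mul_pos (hpos j) hfactor).le) hterm
  rw [← tsum_mul_right]
  exact hsummable_mul.tsum_le_tsum hterm hsummable

theorem stmt12_general {lam n C s : ℝ} (hlam : 1 < lam) (hn : 0 < n) (hC : 0 < C)
    {ι : Type*} {ℓ : ι → ℝ} (hpos : ∀ j, 0 < ℓ j) (hle : ∀ j, ℓ j ≤ lam ^ (-n))
    (hsum : C ≤ ∑' j, ℓ j) (hs : 0 ≤ s) (heq : HasSum (fun j ↦ ℓ j ^ (1 - s)) 1) :
    s ≤ (1 - C) / (C * n * Real.log lam) := by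
  have hlog : 0 < Real.log lam := Real.log_pos hlam
  have hle_exp (j : ι) : ℓ j ≤ Real.exp (-(n * Real.log lam)) := by
    have hrpow : lam ^ (-n) = Real.exp (-(n * Real.log lam)) := by
      rw [Real.rpow_def_of_pos (zero_lt_one.trans hlam)]
      ring_nf
    exact (hle j).trans_eq hrpow
  have hbound : C * (1 + s * (n * Real.log lam)) ≤ 1 :=
    calc
      C * (1 + s * (n * Real.log lam)) ≤ (∑' j, ℓ j) * (1 + s * (n * Real.log lam)) := by
        gcongr
      _ ≤ ∑' j, ℓ j ^ (1 - s) :=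
        tsum_mul_one_add_mul_le_tsum_rpow_one_sub hpos hle_exp (by positivity) hs heq.summable
      _ = 1 := heq.tsum_eq
  rw [le_div_iff₀ (by positivity)]
  linarith

/-- Key estimate bounding `s = 1 - vdim Λ(A(n))` in the proof that the
repellers `Λ(A(n))` have Hausdorff dimension at least `1 - C'/n`. -/
theorem stmt12 (lam : ℝ) (hlam : 1 < lam) (n : ℕ) (hn : 1 ≤ n) (C : ℝ)
    (hC : C ∈ Set.Ioc (0:ℝ) 1)
    (m : ℕ) (ℓ : Fin m → ℝ) (hpos : ∀ j, 0 < ℓ j) (hle : ∀ j, ℓ j ≤ lam ^ (-(n : ℝ)))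
    (hsum₁ : C ≤ ∑ j, ℓ j) (hsum₂ : ∑ j, ℓ j ≤ 1)
    (s : ℝ) (hs : s ∈ Set.Icc (0:ℝ) 1) (heq : ∑ j, ℓ j ^ (1 - s) = 1) :
    s ≤ (1 - C) / (C * n * Real.log lam) :=
  stmt12_general hlam (Nat.cast_pos.2 hn) hC.1 hpos hle (hsum₁.trans_eq (tsum_fintype ℓ).symm)
    hs.1 (by simpa only [heq] using hasSum_fintype fun j ↦ ℓ j ^ (1 - s))
end
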